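/- Let G be a finitely generated group with finite generating set S, let H_n be geodesic spaces with Δ-thin triangles, and let ρ_n : G → Isom(H_n) be a sequence of representations that blows up. Let K be the complete graph on vertex set G, x_n an approximate center of ρ_n, ι_n : K → H_n the equivariant straight map with ι_n(g) = ρ_n(g)x_n, and d_n = ι_n*d_{H_n}. Then there is a subsequence and λ_n → 0 so that λ_n d_n converges pointwise to a pseudo-metric d̄ on K whose associated metric space is an ℝ-tree Γ; the action of G on K induces an isometric action σ of G on Γ; some element of σ(G) is hyperbolic; and the length functions satisfy lim L(ρ_n) = L(σ) in PLF(G). If in addition σ is irreducible and L(σ) takes only integer values, then the minimal G-invariant subtree of Γ is a simplicial tree on which G acts with the same length function as σ. -/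

import Mathlib

open Set Filter Metric

section Common

variable {H : Type*} [MetricSpace H]

/-- `γ` parametrizes a geodesic from `a` to `b` by arclength on `[0, dist a b]`. -/
def IsGeodesicSegment (γ : ℝ → H) (a b : H) : Prop :=
  γ 0 = a ∧ γ (dist a b) = b ∧
    ∀ s ∈ Set.Icc (0:ℝ) (dist a b), ∀ t ∈ Set.Icc (0:ℝ) (dist a b),
      dist (γ s) (γ t) = |s - t|

/-- A geodesic space: every pair of points is joined by a geodesic. -/
def GeodesicSpace (H : Type*) [MetricSpace H] : Prop :=
  ∀ a b : H, ∃ γ : ℝ → H, IsGeodesicSegment γ a b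

/-- The image of a geodesic segment from `a` to `b`. -/
def segImage (γ : ℝ → H) (a b : H) : Set H :=
  γ '' Set.Icc 0 (dist a b)

/-- A space has `Δ`-thin triangles if each side of every geodesic triangle is contained
in the `Δ`-neighborhood of the union of the other two sides. -/
def ThinTriangles (H : Type*) [MetricSpace H] (Δ : ℝ) : Prop :=
  ∀ a b c : H, ∀ γab γbc γca : ℝ → H,
    IsGeodesicSegment γab a b → IsGeodesicSegment γbc b c → IsGeodesicSegment γca c a →
      ∀ x ∈ segImage γab a b, ∃ y ∈ segImage γbc b c ∪ segImage γca c a, dist x y ≤ Δ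

/-- An arc from `a` to `b`, parametrized (injectively and continuously) by `[0,1]`. -/
def IsArcParam (α : ℝ → H) (a b : H) : Prop :=
  ContinuousOn α (Set.Icc 0 1) ∧ Set.InjOn α (Set.Icc 0 1) ∧ α 0 = a ∧ α 1 = b

/-- An `ℝ`-tree: a metric space in which every pair of points is joined by a geodesic
(so it is a path-metric space and arcs are isometric to intervals of `ℝ`) and in which
the arc joining two points is unique. -/
def IsRTree (X : Type*) [MetricSpace X] : Prop :=
  (∀ a b : X, ∃ γ : ℝ → X, IsGeodesicSegment γ a b) ∧
  ∀ a b : X, ∀ α β : ℝ → X, IsArcParam α a b → IsArcParam β a b →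
    α '' Set.Icc 0 1 = β '' Set.Icc 0 1

/-- The translation length of an isometry. -/
noncomputable def translationLength {X : Type*} [MetricSpace X] (τ : X ≃ᵢ X) : ℝ :=
  ⨅ x : X, dist x (τ x)

/-- The core of an isometry of an `ℝ`-tree: points moved the minimal distance. -/
def isomCore {X : Type*} [MetricSpace X] (τ : X ≃ᵢ X) : Set X :=
  {x : X | dist x (τ x) = translationLength τ}

/-- An elliptic isometry: one having a fixed point. -/
def IsElliptic {X : Type*} [MetricSpace X] (τ : X ≃ᵢ X) : Prop :=
  ∃ x, τ x = x

/-- A hyperbolic isometry of an `ℝ`-tree: positive translation length, with core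
isometric to the real line (its axis). -/
def IsHyperbolicIsom {X : Type*} [MetricSpace X] (τ : X ≃ᵢ X) : Prop :=
  0 < translationLength τ ∧
    ∃ e : ℝ → X, (∀ s t : ℝ, dist (e s) (e t) = |s - t|) ∧ Set.range e = isomCore τ

/-- A metric simplicial tree: an `ℝ`-tree together with a closed discrete set `V` of
vertices such that each connected component of the complement of `V` is an open edge:
it is the interior of a geodesic segment of positive length with endpoints in `V`. -/
def IsMetricSimplicialTree (X : Type*) [MetricSpace X] : Prop :=
  IsRTree X ∧
    ∃ V : Set X, IsClosed V ∧
      (∀ v ∈ V, ∃ ε > 0, ∀ w ∈ V, dist v w < ε → w = v) ∧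
      ∀ x ∈ Vᶜ, ∃ L > (0:ℝ), ∃ f : ℝ → X,
        (∀ s ∈ Set.Icc (0:ℝ) L, ∀ t ∈ Set.Icc (0:ℝ) L, dist (f s) (f t) = |s - t|) ∧
        f '' Set.Ioo 0 L = connectedComponentIn Vᶜ x ∧ f 0 ∈ V ∧ f L ∈ V

end Common

open scoped Classical

section CompleteGraph

/-- The convex combination `(1-t)·δ_u + t·δ_v` of two Dirac functions on `G`. -/
noncomputable def deltaComb {G : Type*} (u v : G) (t : ℝ) : G → ℝ :=
  fun x => (1 - t) * (if x = u then 1 else 0) + t * (if x = v then 1 else 0)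

/-- The geometric realization of the complete graph `K(G)` with vertex set `G`:
all convex combinations of two Dirac functions; `deltaComb u v t` is the point at
parameter `t` on the edge joining the vertices `u` and `v`. -/
def KG (G : Type*) : Type _ :=
  {f : G → ℝ // ∃ u v : G, ∃ t : ℝ, t ∈ Set.Icc (0:ℝ) 1 ∧ f = deltaComb u v t}

/-- The point at parameter `t ∈ [0,1]` on the edge of `K(G)` joining `u` to `v`. -/
noncomputable def kpt {G : Type*} (u v : G) (t : ℝ) (ht : t ∈ Set.Icc (0:ℝ) 1) : KG G :=
  ⟨deltaComb u v t, u, v, t, ht, rfl⟩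

/-- The vertex of `K(G)` corresponding to `g : G`. -/
noncomputable def vtx {G : Type*} (g : G) : KG G :=
  kpt g g 0 ⟨le_refl _, zero_le_one⟩

/-- The action of `G` on `K(G)` by left multiplication on the vertices, extended
affinely over the edges. -/
noncomputable def leftMulKG {G : Type*} [Group G] (g : G) (p : KG G) : KG G :=
  ⟨fun x => p.1 (g⁻¹ * x), by
    obtain ⟨u, v, t, ht, hf⟩ := p.2
    refine ⟨g * u, g * v, t, ht, ?_⟩
    funext x
    rw [hf]
    simp [deltaComb, inv_mul_eq_iff_eq_mul]⟩

/-- A map `ι : K(G) → H` is straight if it is linear on each edge of `K(G)`. -/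
def StraightOnKG {G H : Type*} [MetricSpace H] (ι : KG G → H) : Prop :=
  ∀ u v : G, ∀ t : ℝ, ∀ ht : t ∈ Set.Icc (0:ℝ) 1,
    dist (ι (kpt u v 0 ⟨le_refl _, zero_le_one⟩)) (ι (kpt u v t ht))
      = t * dist (ι (kpt u v 0 ⟨le_refl _, zero_le_one⟩))
          (ι (kpt u v 1 ⟨zero_le_one, le_refl _⟩))

/-- `r_S(x) = max {d(x, ρ(α)x) : α ∈ S}`. -/
noncomputable def rS {G H : Type*} [MetricSpace H] (S : Finset G) (hS : S.Nonempty)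
    (ρ : G → (H ≃ᵢ H)) (x : H) : ℝ :=
  S.sup' hS (fun α => dist x (ρ α x))

/-- The rescaling factor `λ = (max {1, d(ι(1_G), ι(s)) : s ∈ S})⁻¹`. -/
noncomputable def rescaleFactor {G H : Type*} [Group G] [MetricSpace H]
    (S : Finset G) (hS : S.Nonempty) (ι : KG G → H) : ℝ :=
  (max 1 (S.sup' hS fun s => dist (ι (vtx (1 : G))) (ι (vtx s))))⁻¹

end CompleteGraph

/-!
Everything passes through the four-point inequality: thin triangles imply it with a defect
proportional to `Δ`, rescaling by `λ → 0` kills the defect, so the limit pseudo-metric satisfies it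
exactly. Straightness makes the limit metric determined by its values on the countable vertex set,
where a diagonal argument applies, and makes the quotient geodesic; a geodesic space satisfying the
exact four-point condition is an `ℝ`-tree. Up to the defect, the translation length of `τ` is
`max 0 (d(x, τ²x) - d(x, τx))` for any `x`, and this formula passes to the limit. If every element
were elliptic, the generators would have a common fixed point in the limit, contradicting the choice
of approximate centers. When the translation lengths are integers, the distance between any two
branch points in the span of the axes is a multiple of `1 / 4`, so the minimal subtree has
a discrete set of vertices.
-/

open scoped Topology

/-- Metric betweenness: `y` lies on a geodesic from `x` to `z`, as far as distances can tell. -/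
abbrev MBtw {X : Type*} [PseudoMetricSpace X] (x y z : X) : Prop :=
  dist x y + dist y z = dist x z

/-- The four-point condition with defect `δ`. It is Gromov hyperbolicity expressed through
distances only, so it passes to limits; for `δ = 0` it characterizes subspaces of `ℝ`-trees. -/
def FourPoint (X : Type*) [PseudoMetricSpace X] (δ : ℝ) : Prop :=
  ∀ x y z w : X, dist x z + dist y w ≤ max (dist x y + dist z w) (dist x w + dist y z) + δ

/-- `p` and `q` are joined by points at all intermediate distances. Under `FourPoint X 0` these
points form a geodesic. -/
def HasSegment {X : Type*} [PseudoMetricSpace X] (p q : X) : Prop :=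
  ∀ s ∈ Icc 0 (dist p q), ∃ r, MBtw p r q ∧ dist p r = s

/-- `C` contains every point lying metrically between two of its points. -/
def MetricConvex {X : Type*} [PseudoMetricSpace X] (C : Set X) : Prop :=
  ∀ ⦃u⦄, u ∈ C → ∀ ⦃v⦄, v ∈ C → ∀ ⦃w⦄, MBtw u w v → w ∈ C

section Betweenness

variable {X : Type*} [PseudoMetricSpace X] {a b p q r s u w x y z : X} {δ : ℝ}

theorem mbtw_self_left (x y : X) : MBtw x x y := by simp [MBtw]

theorem mbtw_self_right (x y : X) : MBtw x y y := by simp [MBtw]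

theorem MBtw.symm (h : MBtw x y z) : MBtw z y x := by
  rw [MBtw, dist_comm z, dist_comm y x, dist_comm z x, add_comm]
  exact h

theorem MBtw.trans_left (h₁ : MBtw w y z) (h₂ : MBtw w x y) : MBtw w x z := by
  linarith [dist_triangle w x z, dist_triangle x y z]

theorem MBtw.trans_left_right (h₁ : MBtw w y z) (h₂ : MBtw w x y) : MBtw x y z := by
  linarith [dist_triangle w x z, dist_triangle x y z]

theorem MBtw.dist_left_le (h : MBtw x y z) : dist x y ≤ dist x z := by
  linarith [dist_nonneg (x := y) (y := z)]

theorem FourPoint.nonneg (hX : FourPoint X δ) (x : X) : 0 ≤ δ := by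
  simpa using hX x x x x

theorem FourPoint.dist_le_of_mbtw (hX : FourPoint X δ) (h : MBtw a p b) (q : X) :
    dist p q ≤ max (dist a q - dist a p) (dist b q - dist p b) + δ := by
  have hq := hX a p b q
  rw [← sub_le_iff_le_add] at hq ⊢
  rcases le_max_iff.1 hq with h' | h'
  · exact le_max_of_le_right (by linarith)
  · exact le_max_of_le_left (by linarith)

theorem FourPoint.mbtw_or (hX : FourPoint X 0) (h : MBtw a p b) (q : X) :
    MBtw a p q ∨ MBtw q p b := by
  have hq := hX a p b q
  have haq := dist_triangle a p q
  have hqb := dist_triangle q p b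
  rw [MBtw, MBtw, dist_comm q p, dist_comm q b] at *
  rcases le_max_iff.1 (hq.trans_eq (add_zero _)) with h' | h'
  · right; linarith
  · left; linarith

theorem FourPoint.dist_of_mbtw_of_mbtw (hX : FourPoint X 0) (h₁ : MBtw w x y) (h₂ : MBtw x y z)
    (hxy : 0 < dist x y) : dist w z = dist w x + dist x y + dist y z := by
  have hz := hX w x y z
  have htri := dist_triangle w y z
  rcases le_max_iff.1 (hz.trans_eq (add_zero _)) with h' | h' <;> linarith

theorem FourPoint.mbtw_of_dist_lt (hX : FourPoint X 0) (h : MBtw u w z)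
    (hlt : dist z y < dist z w) : MBtw u w y := by
  refine (hX.mbtw_or h y).resolve_right fun h' ↦ ?_
  linarith [h'.symm.dist_left_le, dist_comm y z]

theorem FourPoint.mbtw_of_dist_le (hX : FourPoint X 0) (hr : MBtw a r b) (hs : MBtw a s b)
    (hle : dist a r ≤ dist a s) : MBtw a r s := by
  rcases hX.mbtw_or hr s with h | h
  · exact h
  · linarith [dist_comm r s, dist_nonneg (x := r) (y := s)]

theorem FourPoint.dist_eq_abs_sub (hX : FourPoint X 0) (hr : MBtw a r b) (hs : MBtw a s b) :
    dist r s = |dist a r - dist a s| := by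
  wlog hle : dist a r ≤ dist a s generalizing r s
  · rw [dist_comm, abs_sub_comm, this hs hr (le_of_not_ge hle)]
  rw [abs_of_nonpos (sub_nonpos.2 hle)]
  linarith [hX.mbtw_of_dist_le hr hs hle]

theorem HasSegment.symm (h : HasSegment p q) : HasSegment q p := by
  rintro s ⟨hs, hs'⟩
  rw [dist_comm] at hs'
  obtain ⟨r, hr, hr'⟩ := h (dist p q - s) ⟨by linarith, by linarith⟩
  exact ⟨r, hr.symm, by linarith [dist_comm r q]⟩

theorem HasSegment.of_mbtw (hX : FourPoint X 0) (h : HasSegment a q) (hp : MBtw a p q) :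
    HasSegment p q := by
  rintro s ⟨hs, hs'⟩
  obtain ⟨r, hr, hr'⟩ := h (dist a p + s) ⟨by positivity, by linarith⟩
  have hpr := hX.mbtw_of_dist_le hp hr (by linarith)
  exact ⟨r, hr.trans_left_right hpr, by linarith⟩

theorem HasSegment.exists_midpoint (h : HasSegment p q) :
    ∃ m, MBtw p m q ∧ dist p m = dist p q / 2 :=
  h _ ⟨by positivity, half_le_self dist_nonneg⟩

end Betweenness

section MetricBetweenness

variable {X : Type*} [MetricSpace X] {a b c r s u v w x y z : X}

theorem MBtw.eq_of_self (h : MBtw x y x) : y = x := by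
  rw [MBtw, dist_self, dist_comm y x] at h
  exact (dist_le_zero.1 (by linarith)).symm

theorem MBtw.eq_of_mbtw_of_mbtw (h : MBtw u w v) (hu : MBtw u c w) (hv : MBtw v c w) : c = w := by
  have := dist_triangle u c v
  exact dist_le_zero.1 (by linarith [dist_comm v c, dist_comm v w])

theorem FourPoint.mbtw_expand_left (hX : FourPoint X 0) (h₁ : MBtw w x y) (h₂ : MBtw x y z)
    (hxy : x ≠ y) : MBtw w x z := by
  linarith [hX.dist_of_mbtw_of_mbtw h₁ h₂ (dist_pos.2 hxy)]

theorem FourPoint.mbtw_expand_right (hX : FourPoint X 0) (h₁ : MBtw w x y) (h₂ : MBtw x y z)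
    (hxy : x ≠ y) : MBtw w y z :=
  (hX.mbtw_expand_left h₂.symm h₁.symm hxy.symm).symm

theorem FourPoint.eq_of_dist_eq (hX : FourPoint X 0) (hr : MBtw a r b) (hs : MBtw a s b)
    (h : dist a r = dist a s) : r = s := by
  rw [← dist_eq_zero, hX.dist_eq_abs_sub hr hs, h, sub_self, abs_zero]

end MetricBetweenness

section Geodesics

variable {X : Type*} [MetricSpace X] {a b z : X} {γ : ℝ → X} {C : Set X}

theorem IsGeodesicSegment.dist_left (h : IsGeodesicSegment γ a b) {s : ℝ}
    (hs : s ∈ Icc 0 (dist a b)) : dist a (γ s) = s := by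
  have := h.2.2 0 ⟨le_rfl, dist_nonneg⟩ s hs
  rwa [h.1, zero_sub, abs_neg, abs_of_nonneg hs.1] at this

theorem IsGeodesicSegment.mbtw (h : IsGeodesicSegment γ a b) {s : ℝ}
    (hs : s ∈ Icc 0 (dist a b)) : MBtw a (γ s) b := by
  have hb := h.2.2 s hs (dist a b) ⟨dist_nonneg, le_rfl⟩
  rw [h.2.1, abs_of_nonpos (sub_nonpos.2 hs.2)] at hb
  linarith [h.dist_left hs]

theorem IsGeodesicSegment.continuousOn (h : IsGeodesicSegment γ a b) :
    ContinuousOn γ (Icc 0 (dist a b)) :=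
  LipschitzOnWith.continuousOn (K := 1) <| .of_dist_le_mul fun s hs t ht ↦ by
    rw [h.2.2 s hs t ht, Real.dist_eq, NNReal.coe_one, one_mul]

theorem IsGeodesicSegment.left_mem_segImage (h : IsGeodesicSegment γ a b) : a ∈ segImage γ a b :=
  ⟨0, ⟨le_rfl, dist_nonneg⟩, h.1⟩

theorem IsGeodesicSegment.right_mem_segImage (h : IsGeodesicSegment γ a b) : b ∈ segImage γ a b :=
  ⟨dist a b, ⟨dist_nonneg, le_rfl⟩, h.2.1⟩

theorem IsGeodesicSegment.mbtw_of_mem (h : IsGeodesicSegment γ a b) (hz : z ∈ segImage γ a b) :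
    MBtw a z b := by
  obtain ⟨s, hs, rfl⟩ := hz
  exact h.mbtw hs

theorem IsGeodesicSegment.isPreconnected_segImage (h : IsGeodesicSegment γ a b) :
    IsPreconnected (segImage γ a b) :=
  isPreconnected_Icc.image _ h.continuousOn

theorem IsGeodesicSegment.isCompact_segImage (h : IsGeodesicSegment γ a b) :
    IsCompact (segImage γ a b) :=
  isCompact_Icc.image_of_continuousOn h.continuousOn

theorem GeodesicSpace.hasSegment (hX : GeodesicSpace X) (a b : X) : HasSegment a b := by
  obtain ⟨γ, hγ⟩ := hX a b
  exact fun s hs ↦ ⟨γ s, hγ.mbtw hs, hγ.dist_left hs⟩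

theorem HasSegment.exists_isGeodesicSegment (hX : FourPoint X 0) (h : HasSegment a b) :
    ∃ γ : ℝ → X, IsGeodesicSegment γ a b := by
  have hpt (s : ℝ) : ∃ r, s ∈ Icc 0 (dist a b) → MBtw a r b ∧ dist a r = s := by
    by_cases hs : s ∈ Icc 0 (dist a b)
    · exact (h s hs).imp fun r hr _ ↦ hr
    · exact ⟨a, fun hs' ↦ absurd hs' hs⟩
  choose γ hγ using hpt
  have h0 := hγ 0 ⟨le_rfl, dist_nonneg⟩
  have h1 := hγ (dist a b) ⟨dist_nonneg, le_rfl⟩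
  refine ⟨γ, (dist_eq_zero.1 h0.2).symm, dist_eq_zero.1 (by linarith), fun s hs t ht ↦ ?_⟩
  rw [hX.dist_eq_abs_sub (hγ s hs).1 (hγ t ht).1, (hγ s hs).2, (hγ t ht).2]

theorem FourPoint.geodesicSpace (hX : FourPoint X 0) (h : ∀ a b : X, HasSegment a b) :
    GeodesicSpace X :=
  fun a b ↦ (h a b).exists_isGeodesicSegment hX

theorem FourPoint.exists_center (hX : FourPoint X 0) (hgeo : GeodesicSpace X) (x y z : X) :
    ∃ c, MBtw x c y ∧ MBtw x c z ∧ MBtw y c z := by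
  have hxyz := dist_triangle x y z
  have hyxz := dist_triangle y x z
  have hxzy := dist_triangle x z y
  rw [dist_comm y x] at hyxz
  rw [dist_comm z y] at hxzy
  obtain ⟨c, hc, hxc⟩ := hgeo.hasSegment x y ((dist x y + dist x z - dist y z) / 2)
    ⟨by linarith, by linarith⟩
  have hcz := hX.dist_le_of_mbtw hc z
  have hmax : max (dist x z - dist x c) (dist y z - dist c y) =
      (dist x z + dist y z - dist x y) / 2 := by
    rw [max_eq_left] <;> linarith
  rw [hmax] at hcz
  exact ⟨c, hc, by linarith [dist_triangle x c z],
    by linarith [dist_triangle y c z, dist_comm y c]⟩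

-- A point `w` of `[u, v]` outside `C` separates `C`: the points on the far side of `w` from `u`
-- form an open set by `FourPoint.mbtw_of_dist_lt`.
theorem FourPoint.metricConvex_of_isPreconnected (hX : FourPoint X 0) (hC : IsPreconnected C) :
    MetricConvex C := by
  intro u hu v hv w hw
  by_contra hwC
  have hne {z : X} (hz : z ∈ C) : z ≠ w := fun h ↦ hwC (h ▸ hz)
  have hnear : IsOpen {z | dist u z < dist u w + dist w z} :=
    isOpen_lt (by fun_prop) (by fun_prop)
  have hfar : IsOpen {z | MBtw u w z ∧ z ≠ w} := by
    refine Metric.isOpen_iff.2 fun z hz ↦ ⟨dist z w, dist_pos.2 hz.2, fun z' hz' ↦ ?_⟩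
    rw [Metric.mem_ball, dist_comm] at hz'
    exact ⟨hX.mbtw_of_dist_lt hz.1 hz', by rintro rfl; exact hz'.false⟩
  have hcover : C ⊆ {z | dist u z < dist u w + dist w z} ∪ {z | MBtw u w z ∧ z ≠ w} := by
    intro z hz
    rcases (dist_triangle u w z).lt_or_eq with h | h
    · exact Or.inl h
    · exact Or.inr ⟨h.symm, hne hz⟩
  have hpos := dist_pos.2 (hne hu)
  obtain ⟨z, -, hz, hz', -⟩ := hC _ _ hnear hfar hcover
    ⟨u, hu, by change dist u u < _; rw [dist_self, dist_comm w]; positivity⟩ ⟨v, hv, hw, hne hv⟩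
  exact hz.ne' hz'

theorem MetricConvex.isPreconnected (hgeo : GeodesicSpace X) (hC : MetricConvex C) :
    IsPreconnected C := by
  refine isPreconnected_of_forall_pair fun u hu v hv ↦ ?_
  obtain ⟨γ, hγ⟩ := hgeo u v
  exact ⟨segImage γ u v, fun z hz ↦ hC hu hv (hγ.mbtw_of_mem hz), hγ.left_mem_segImage,
    hγ.right_mem_segImage, hγ.isPreconnected_segImage⟩

-- The center of `a`, `b` and a point `z` of the arc lies on both halves of the arc, so it is `z`.
theorem FourPoint.image_eq_of_isArcParam (hX : FourPoint X 0) (hgeo : GeodesicSpace X)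
    {α : ℝ → X} (hα : IsArcParam α a b) : α '' Icc 0 1 = {z | MBtw a z b} := by
  obtain ⟨hcont, hinj, rfl, rfl⟩ := hα
  have hconvex {s t : ℝ} (hs : 0 ≤ s) (ht : t ≤ 1) : MetricConvex (α '' Icc s t) :=
    hX.metricConvex_of_isPreconnected
      (isPreconnected_Icc.image _ (hcont.mono (Icc_subset_Icc hs ht)))
  refine Subset.antisymm ?_ fun z hz ↦
    hconvex le_rfl le_rfl ⟨0, by simp, rfl⟩ ⟨1, by simp, rfl⟩ hz
  rintro _ ⟨t, ⟨ht0, ht1⟩, rfl⟩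
  obtain ⟨c, hc, hc0, hc1⟩ := hX.exists_center hgeo (α 0) (α 1) (α t)
  obtain ⟨r, ⟨hr0, hrt⟩, hr⟩ :=
    hconvex le_rfl ht1 ⟨0, ⟨le_rfl, ht0⟩, rfl⟩ ⟨t, ⟨ht0, le_rfl⟩, rfl⟩ hc0
  obtain ⟨r', ⟨htr', hr1'⟩, hr'⟩ :=
    hconvex ht0 le_rfl ⟨1, ⟨ht1, le_rfl⟩, rfl⟩ ⟨t, ⟨le_rfl, ht1⟩, rfl⟩ hc1
  have hrr' : r = r' :=
    hinj ⟨hr0, hrt.trans ht1⟩ ⟨ht0.trans htr', hr1'⟩ (hr.trans hr'.symm)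
  obtain rfl : r = t := le_antisymm hrt (hrr' ▸ htr')
  rw [hr]
  exact hc

theorem FourPoint.isRTree (hX : FourPoint X 0) (hgeo : GeodesicSpace X) : IsRTree X :=
  ⟨hgeo, fun a b α β hα hβ ↦ by
    rw [hX.image_eq_of_isArcParam hgeo hα, hX.image_eq_of_isArcParam hgeo hβ]⟩

theorem FourPoint.subtype {δ : ℝ} (hX : FourPoint X δ) (C : Set X) : FourPoint C δ :=
  fun x y z w ↦ hX x y z w

theorem MetricConvex.geodesicSpace (hX : FourPoint X 0) (hgeo : GeodesicSpace X)
    (hC : MetricConvex C) : GeodesicSpace C :=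
  (hX.subtype C).geodesicSpace fun a b s hs ↦ by
    obtain ⟨r, hr, hr'⟩ := hgeo.hasSegment (a : X) b s hs
    exact ⟨⟨r, hC a.2 b.2 hr⟩, hr, hr'⟩

end Geodesics

section TranslationLength

variable {X : Type*} [MetricSpace X] {m x y z : X} {δ : ℝ} {τ : X ≃ᵢ X}

theorem mbtw_map_iff (τ : X ≃ᵢ X) : MBtw (τ x) (τ y) (τ z) ↔ MBtw x y z := by
  simp only [MBtw, τ.dist_eq]

theorem MBtw.map (τ : X ≃ᵢ X) (h : MBtw x y z) : MBtw (τ x) (τ y) (τ z) :=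
  (mbtw_map_iff τ).2 h

theorem translationLength_le_dist (τ : X ≃ᵢ X) (x : X) : translationLength τ ≤ dist x (τ x) :=
  ciInf_le ⟨0, forall_mem_range.2 fun _ ↦ dist_nonneg⟩ x

theorem translationLength_nonneg (τ : X ≃ᵢ X) : 0 ≤ translationLength τ :=
  Real.iInf_nonneg fun _ ↦ dist_nonneg

theorem FourPoint.dist_sub_dist_le (hX : FourPoint X δ) (τ : X ≃ᵢ X) (x y : X) :
    dist x (τ (τ x)) - dist x (τ x) ≤ dist y (τ y) + δ := by
  have hfour := hX x (τ x) (τ (τ x)) (τ y)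
  have htri := dist_triangle (τ x) (τ y) y
  have htri' := dist_triangle x y (τ y)
  rw [dist_comm (τ y) y] at htri
  simp only [τ.dist_eq] at hfour htri
  have hmax : max (dist x (τ x) + dist (τ x) y) (dist x (τ y) + dist x (τ x)) ≤
      dist x (τ x) + dist x y + dist y (τ y) := max_le (by linarith) (by linarith)
  linarith

theorem FourPoint.dist_map_midpoint_le (hX : FourPoint X δ) (τ : X ≃ᵢ X)
    (hm : MBtw x m (τ x)) (hxm : dist x m = dist x (τ x) / 2) :
    dist m (τ m) ≤ max 0 (dist x (τ (τ x)) - dist x (τ x)) + 2 * δ := by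
  have hδ := hX.nonneg x
  have hm' := hX.dist_le_of_mbtw hm (τ m)
  have hτm := hX.dist_le_of_mbtw (hm.map τ) x
  rw [dist_comm (τ m) x] at hτm
  simp only [τ.dist_eq, dist_comm (τ x) x, dist_comm (τ (τ x)) x] at hm' hτm
  have h0 := le_max_left 0 (dist x (τ (τ x)) - dist x (τ x))
  have h1 := le_max_right 0 (dist x (τ (τ x)) - dist x (τ x))
  set M := max 0 (dist x (τ (τ x)) - dist x (τ x))
  have hxτm : dist x (τ m) ≤ M + dist x (τ x) / 2 + δ :=
    hτm.trans (add_le_add_left (max_le (by linarith) (by linarith)) δ)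
  have : dist m (τ m) ≤ M + δ + δ :=
    hm'.trans (add_le_add_left (max_le (by linarith) (by linarith)) δ)
  linarith

-- In terms of distances only, so that the estimate survives rescaled limits.
theorem FourPoint.abs_translationLength_sub_le (hX : FourPoint X δ) (hgeo : GeodesicSpace X)
    (τ : X ≃ᵢ X) (x : X) :
    |translationLength τ - max 0 (dist x (τ (τ x)) - dist x (τ x))| ≤ 2 * δ := by
  have : Nonempty X := ⟨x⟩
  obtain ⟨m, hm, hxm⟩ := (hgeo.hasSegment x (τ x)).exists_midpoint
  have hδ := hX.nonneg x
  have hlower : max 0 (dist x (τ (τ x)) - dist x (τ x)) ≤ translationLength τ + δ :=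
    max_le (add_nonneg (translationLength_nonneg τ) hδ)
      (sub_le_iff_le_add.1 (le_ciInf fun y ↦ sub_le_iff_le_add.2 (hX.dist_sub_dist_le τ x y)))
  rw [abs_le]
  constructor <;> linarith [translationLength_le_dist τ m, hX.dist_map_midpoint_le τ hm hxm]

theorem FourPoint.translationLength_eq (hX : FourPoint X 0) (hgeo : GeodesicSpace X)
    (τ : X ≃ᵢ X) (x : X) :
    translationLength τ = max 0 (dist x (τ (τ x)) - dist x (τ x)) := by
  have h := hX.abs_translationLength_sub_le hgeo τ x
  rwa [mul_zero, abs_nonpos_iff, sub_eq_zero] at h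

theorem FourPoint.midpoint_mem_isomCore (hX : FourPoint X 0) (hgeo : GeodesicSpace X)
    (τ : X ≃ᵢ X) (hm : MBtw x m (τ x)) (hxm : dist x m = dist x (τ x) / 2) : m ∈ isomCore τ := by
  refine le_antisymm ?_ (translationLength_le_dist τ m)
  rw [hX.translationLength_eq hgeo τ x]
  simpa using hX.dist_map_midpoint_le τ hm hxm

theorem FourPoint.dist_map_map_eq (hX : FourPoint X 0) (hgeo : GeodesicSpace X)
    (hτ : 0 < translationLength τ) (x : X) :
    dist x (τ (τ x)) = dist x (τ x) + translationLength τ := by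
  have h := hX.translationLength_eq hgeo τ x
  rw [h, lt_max_iff, or_iff_right (lt_irrefl _)] at hτ
  rw [max_eq_right hτ.le] at h
  linarith

end TranslationLength

/-- `p` lies on a line translated by `τ`: the orbit of `p` runs monotonically along a geodesic. -/
structure OnAxis {X : Type*} [MetricSpace X] (τ : X ≃ᵢ X) (p : X) : Prop where
  ne : τ p ≠ p
  mbtw : MBtw p (τ p) (τ (τ p))

/-- `p` is the foot of `c` on the axis of `τ`: the axis leaves `p` in both directions away
from `c`. -/
structure IsAxisFoot {X : Type*} [MetricSpace X] (τ : X ≃ᵢ X) (c p : X) : Prop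
    extends OnAxis τ p where
  mbtw_map : MBtw c p (τ p)
  mbtw_inv : MBtw c p (τ⁻¹ p)

section Axes

variable {X : Type*} [MetricSpace X] {c m n p q x y : X} {g h s t τ : X ≃ᵢ X}

theorem OnAxis.dist_map_pos (h : OnAxis τ p) : 0 < dist p (τ p) :=
  dist_pos.2 h.ne.symm

theorem OnAxis.translationLength_eq (hX : FourPoint X 0) (hgeo : GeodesicSpace X)
    (h : OnAxis τ p) : translationLength τ = dist p (τ p) := by
  rw [hX.translationLength_eq hgeo τ p, ← h.mbtw, τ.dist_eq, add_sub_cancel_left,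
    max_eq_right dist_nonneg]

theorem FourPoint.onAxis_iff_mem_isomCore (hX : FourPoint X 0) (hgeo : GeodesicSpace X)
    (hτ : 0 < translationLength τ) : OnAxis τ p ↔ p ∈ isomCore τ := by
  change _ ↔ dist p (τ p) = translationLength τ
  refine ⟨fun h ↦ (h.translationLength_eq hX hgeo).symm, fun h ↦ ⟨fun hp ↦ ?_, ?_⟩⟩
  · rw [hp, dist_self] at h
    exact hτ.ne h
  · rw [MBtw, τ.dist_eq, hX.dist_map_map_eq hgeo hτ, h]

theorem OnAxis.inv (h : OnAxis τ p) : OnAxis τ⁻¹ p where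
  ne e := h.ne (by simpa using congrArg τ e.symm)
  mbtw := by simpa using (h.mbtw.map (τ⁻¹ * τ⁻¹)).symm

theorem IsAxisFoot.inv (h : IsAxisFoot τ c p) : IsAxisFoot τ⁻¹ c p where
  toOnAxis := h.toOnAxis.inv
  mbtw_map := h.mbtw_inv
  mbtw_inv := by simpa using h.mbtw_map

theorem OnAxis.mbtw_inv_map (h : OnAxis τ p) : MBtw (τ⁻¹ p) p (τ p) := by
  simpa using h.mbtw.map τ⁻¹

theorem OnAxis.dist_pow (hX : FourPoint X 0) (h : OnAxis τ p) (n : ℕ) :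
    dist p ((τ ^ n) p) = n * dist p (τ p) := by
  suffices hind : MBtw p ((τ ^ n) p) ((τ ^ (n + 1)) p) ∧ dist p ((τ ^ n) p) = n * dist p (τ p) from
    hind.2
  induction n with
  | zero => simp [MBtw]
  | succ n ih =>
    obtain ⟨hbtw, hdist⟩ := ih
    have hn (k : ℕ) (z : X) : (τ ^ (k + 1)) z = (τ ^ k) (τ z) := by rw [pow_succ]; rfl
    have hstep := h.mbtw.map (τ ^ n)
    have hne : (τ ^ n) p ≠ (τ ^ n) (τ p) := (τ ^ n).injective.ne h.ne.symm
    simp only [hn] at hbtw ⊢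
    have hd := (τ ^ n).dist_eq p (τ p)
    refine ⟨hX.mbtw_expand_right hbtw hstep hne, ?_⟩
    push_cast
    linarith

theorem OnAxis.dist_zpow (hX : FourPoint X 0) (h : OnAxis τ p) (m n : ℤ) :
    dist ((τ ^ m) p) ((τ ^ n) p) = |(m : ℝ) - n| * dist p (τ p) := by
  wlog hmn : m ≤ n generalizing m n
  · rw [dist_comm, abs_sub_comm, this n m (le_of_not_ge hmn)]
  obtain ⟨k, rfl⟩ := Int.exists_add_of_le hmn
  rw [zpow_add, zpow_natCast, IsometryEquiv.mul_apply, (τ ^ m).dist_eq, h.dist_pow hX]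
  simp

theorem OnAxis.mbtw_zpow (hX : FourPoint X 0) (h : OnAxis τ p) {n : ℕ}
    (hn : dist p y < n * dist p (τ p)) : MBtw ((τ ^ (-n : ℤ)) y) p ((τ ^ (n : ℤ)) y) := by
  have hneg := h.dist_zpow hX (-n) 0
  have hpos := h.dist_zpow hX 0 n
  have hspan := h.dist_zpow hX (-n) n
  push_cast at hneg hpos hspan
  rw [sub_zero, abs_neg, Nat.abs_cast] at hneg
  rw [zero_sub, abs_neg, Nat.abs_cast] at hpos
  rw [abs_of_nonpos (by linarith [n.cast_nonneg (α := ℝ)])] at hspan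
  simp only [zpow_zero, IsometryEquiv.coe_one, id] at hneg hpos
  have hbtw : MBtw ((τ ^ (-n : ℤ)) p) p ((τ ^ (n : ℤ)) p) := by rw [MBtw, hneg, hpos, hspan]; ring
  have hright : MBtw ((τ ^ (-n : ℤ)) p) p ((τ ^ (n : ℤ)) y) :=
    hX.mbtw_of_dist_lt hbtw (by rwa [IsometryEquiv.dist_eq, dist_comm _ p, hpos])
  exact (hX.mbtw_of_dist_lt hright.symm (by rwa [IsometryEquiv.dist_eq, hneg])).symm

theorem IsAxisFoot.of_mbtw (hX : FourPoint X 0) (h : IsAxisFoot τ c p) (hne : c ≠ p)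
    (hc : MBtw p c q) : IsAxisFoot τ q p where
  toOnAxis := h.toOnAxis
  mbtw_map := hX.mbtw_expand_right hc.symm h.mbtw_map hne
  mbtw_inv := hX.mbtw_expand_right hc.symm h.mbtw_inv hne

theorem FourPoint.mbtw_map_of_mbtw_inv (hX : FourPoint X 0) (hp : MBtw (τ⁻¹ y) p y)
    (hp' : MBtw y p (τ y)) (hle : dist y p ≤ dist (τ⁻¹ y) p) : MBtw y p (τ p) := by
  have hτp := hp.map τ
  have hd := τ.dist_eq (τ⁻¹ y) p
  rw [IsometryEquiv.apply_inv_self] at hτp hd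
  exact hX.mbtw_of_dist_le hp' hτp (by rwa [hd])

-- The foot is the center of `τ⁻¹ y`, `y` and `τ y`.
theorem FourPoint.exists_isAxisFoot (hX : FourPoint X 0) (hgeo : GeodesicSpace X)
    (hτ : 0 < translationLength τ) (y : X) : ∃ p, IsAxisFoot τ y p := by
  obtain ⟨p, hinv, hlong, hmap⟩ := hX.exists_center hgeo (τ⁻¹ y) y (τ y)
  have hshort : dist (τ⁻¹ y) y = dist y (τ y) := by simpa using (τ.dist_eq (τ⁻¹ y) y).symm
  have hdouble : dist (τ⁻¹ y) (τ y) = dist y (τ y) + translationLength τ := by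
    rw [← hX.dist_map_map_eq hgeo hτ]
    simpa using (τ.dist_eq (τ⁻¹ y) (τ y)).symm
  have hcomm := dist_comm p y
  have hmap' := hX.mbtw_map_of_mbtw_inv hinv hmap (by linarith)
  have hinv' : MBtw y p (τ⁻¹ p) :=
    hX.mbtw_map_of_mbtw_inv (by simpa using hmap.symm) hinv.symm
      (by rw [inv_inv, dist_comm (τ y)]; linarith)
  have hcore : p ∈ isomCore τ := by
    have hd : dist y (τ p) = dist (τ⁻¹ y) p := by simpa using τ.dist_eq (τ⁻¹ y) p
    change dist p (τ p) = translationLength τ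
    linarith
  exact ⟨p, (hX.onAxis_iff_mem_isomCore hgeo hτ).2 hcore, hmap', hinv'⟩

-- Along the path from `p` through `g p`, `g q`, `g (h q)` to `g (h p)` no backtracking occurs.
theorem IsAxisFoot.mbtw_mul (hX : FourPoint X 0) (hg : IsAxisFoot g q p) (hh : IsAxisFoot h p q)
    (hpq : p ≠ q) :
    MBtw p (g p) (g (h p)) ∧ MBtw p (g (h p)) (g (h (g p))) ∧
      dist p (g (h p)) = dist p (g p) + dist q (h q) + 2 * dist p q := by
  have h₁ : MBtw p (g p) (g q) := by simpa using hg.mbtw_inv.symm.map g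
  have h₂ : MBtw (g p) (g q) (g (h q)) := hh.mbtw_map.map g
  have h₃ : MBtw (g q) (g (h q)) (g (h p)) := by simpa using (hh.mbtw_inv.symm.map h).map g
  have h₄ : MBtw (g (h q)) (g (h p)) (g (h (g p))) := (hg.mbtw_map.map h).map g
  have h₂' : MBtw p (g q) (g (h q)) := hX.mbtw_expand_right h₁ h₂ (g.injective.ne hpq)
  have h₃' : MBtw p (g (h q)) (g (h p)) :=
    hX.mbtw_expand_right h₂' h₃ (g.injective.ne hh.ne.symm)
  have h₄' : MBtw p (g (h p)) (g (h (g p))) :=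
    hX.mbtw_expand_right h₃' h₄ ((h.trans g).injective.ne hpq.symm)
  refine ⟨h₃'.trans_left (h₂'.trans_left h₁), h₄', ?_⟩
  simp only [MBtw, IsometryEquiv.dist_eq] at h₁ h₂' h₃'
  linarith [dist_comm p q]

theorem IsAxisFoot.translationLength_mul (hX : FourPoint X 0) (hgeo : GeodesicSpace X)
    (hg : IsAxisFoot g q p) (hh : IsAxisFoot h p q) (hpq : p ≠ q) :
    translationLength (g * h) = translationLength g + translationLength h + 2 * dist p q := by
  obtain ⟨hstart, hend, hdist⟩ := hg.mbtw_mul hX hh hpq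
  have haxis : OnAxis (g * h) p := by
    have hpos : 0 < dist p (g (h p)) := by
      rw [hdist]
      linarith [hg.dist_map_pos, hh.dist_map_pos, dist_nonneg (x := p) (y := q)]
    refine ⟨(dist_pos.1 hpos).symm, hX.mbtw_expand_left hend ((hstart.map h).map g) ?_⟩
    exact (h.trans g).injective.ne hg.ne.symm
  rw [haxis.translationLength_eq hX hgeo, hg.translationLength_eq hX hgeo,
    hh.translationLength_eq hX hgeo, IsometryEquiv.mul_apply, hdist]

theorem FourPoint.exists_bridge [Nonempty X] (hX : FourPoint X 0) (hgeo : GeodesicSpace X)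
    (hg : 0 < translationLength g) (hh : 0 < translationLength h)
    (hdisj : Disjoint (isomCore g) (isomCore h)) :
    ∃ p q, p ≠ q ∧ IsAxisFoot g q p ∧ IsAxisFoot h p q := by
  obtain ⟨y, hy⟩ := hX.exists_isAxisFoot hgeo hh (Classical.arbitrary X)
  obtain ⟨p, hp⟩ := hX.exists_isAxisFoot hgeo hg y
  obtain ⟨q, hq⟩ := hX.exists_isAxisFoot hgeo hh p
  have hne {a b : X} (ha : OnAxis g a) (hb : OnAxis h b) : a ≠ b := fun e ↦
    disjoint_left.1 hdisj ((hX.onAxis_iff_mem_isomCore hgeo hg).1 ha)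
      ((hX.onAxis_iff_mem_isomCore hgeo hh).1 (e ▸ hb))
  have hpqy : MBtw p q y := by
    by_contra hpqy
    have hmap : MBtw y q (h q) := (hX.mbtw_or hq.mbtw_map y).resolve_left hpqy
    have hinv : MBtw q (h q) (h y) := by
      simpa using (((hX.mbtw_or hq.mbtw_inv y).resolve_left hpqy).map h).symm
    have hd := hX.dist_of_mbtw_of_mbtw hmap hinv hq.dist_map_pos
    have hlen := hq.translationLength_eq hX hgeo
    rw [hy.translationLength_eq hX hgeo] at hlen
    rw [h.dist_eq, dist_comm q y] at hd
    have hyq : y = q := dist_le_zero.1 (by linarith)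
    exact hpqy (hyq ▸ mbtw_self_right p y)
  exact ⟨p, q, hne hp.toOnAxis hq.toOnAxis,
    ⟨hp.toOnAxis, hp.mbtw_map.trans_left_right hpqy.symm,
      hp.mbtw_inv.trans_left_right hpqy.symm⟩, hq⟩

theorem dist_map_eq_of_mbtw_fixed (hX : FourPoint X 0) (hn : t n = n) (hmn : m ≠ n)
    (hm : MBtw m n (t m)) (hx : MBtw x m n) : dist x (t x) = 2 * dist x n := by
  have hntm : n ≠ t m := fun e ↦ hmn (t.injective (hn.trans e)).symm
  have hnt : MBtw n (t m) (t x) := by simpa [hn] using hx.symm.map t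
  have hxn : MBtw x n (t x) :=
    hX.mbtw_expand_left (hX.mbtw_expand_right hx hm hmn) hnt hntm
  have hd := t.dist_eq n x
  rw [hn, dist_comm n x] at hd
  linarith

theorem translationLength_mul_pos_of_mbtw_fixed (hX : FourPoint X 0) (hgeo : GeodesicSpace X)
    (hm : s m = m) (hn : t n = n) (hmn : m ≠ n) (hmt : MBtw m n (t m)) (hns : MBtw n m (s n)) :
    0 < translationLength (s * t) := by
  have h₂ : MBtw m (s n) (s (t m)) := by simpa [hm] using hmt.map s
  have h₃ : MBtw (s n) (s (t m)) (s (t (s n))) := by simpa [hn] using (hns.map t).map s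
  have hmsn : m ≠ s n := fun e ↦ hmn (s.injective (hm.trans e))
  have hsnm : s n ≠ s (t m) := s.injective.ne fun e ↦ hmn (t.injective (hn.trans e)).symm
  have hbtw : MBtw n (s n) (s (t (s n))) :=
    hX.mbtw_expand_left (hX.mbtw_expand_right hns h₂ hmsn) h₃ hsnm
  have haxis : OnAxis (s * t) n := by
    refine ⟨fun e ↦ hmn ?_, ?_⟩
    · rw [IsometryEquiv.mul_apply, hn] at e
      rw [e] at hns
      exact hns.eq_of_self
    · simpa [hn] using hbtw
  rw [haxis.translationLength_eq hX hgeo]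
  exact haxis.dist_map_pos

theorem FourPoint.fixed_of_translationLength_eq_zero (hX : FourPoint X 0) (hgeo : GeodesicSpace X)
    (hx : MBtw x m (s x)) (hm : s m = m) (ht : translationLength t = 0)
    (hst : translationLength (s * t) = 0) (hle : dist x (t x) ≤ dist x (s x)) : t m = m := by
  by_contra hne
  obtain ⟨n, hmt, hmid⟩ := (hgeo.hasSegment m (t m)).exists_midpoint
  have hn : t n = n := (dist_eq_zero.1
    ((hX.midpoint_mem_isomCore hgeo t hmt hmid : dist n (t n) = _).trans ht)).symm
  have hmn : m ≠ n := by rintro rfl; exact hne hn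
  by_cases hxmn : MBtw x m n
  · have hxt := dist_map_eq_of_mbtw_fixed hX hn hmn hmt hxmn
    have hms := s.dist_eq m x
    rw [hm, dist_comm m x] at hms
    linarith [dist_pos.2 hmn]
  · have hsx : MBtw n m (s x) := (hX.mbtw_or hx n).resolve_left hxmn
    have hsxn : ¬ MBtw (s x) m (s n) := fun h ↦
      hxmn ((mbtw_map_iff s).1 (by rwa [hm]))
    have hns : MBtw n m (s n) := ((hX.mbtw_or hsx.symm (s n)).resolve_left hsxn).symm
    exact (translationLength_mul_pos_of_mbtw_fixed hX hgeo hm hn hmn hmt hns).ne' hst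

-- The midpoint `m` works for the generator that moves `z` most.
theorem FourPoint.exists_common_fixed_point {G : Type*} [Group G] (hX : FourPoint X 0)
    (hgeo : GeodesicSpace X) {S : Finset G} (hS : S.Nonempty) (σ : G →* (X ≃ᵢ X)) (z : X)
    (h0 : ∀ g, translationLength (σ g) = 0) : ∃ m, ∀ s ∈ S, σ s m = m := by
  obtain ⟨s, -, hmax⟩ := S.exists_max_image (fun s ↦ dist z (σ s z)) hS
  obtain ⟨m, hm, hmid⟩ := (hgeo.hasSegment z (σ s z)).exists_midpoint
  have hfix : dist m (σ s m) = 0 := (hX.midpoint_mem_isomCore hgeo (σ s) hm hmid).trans (h0 s)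
  exact ⟨m, fun t ht ↦ hX.fixed_of_translationLength_eq_zero hgeo hm (dist_eq_zero.1 hfix).symm
    (h0 t) (by rw [← map_mul, h0]) (hmax t ht)⟩

end Axes

section IsometricLines

variable {X : Type*} [MetricSpace X] {e e' : ℝ → X} {y : X} {s : ℝ} {L : ℝ}

theorem mbtw_of_isometry (he : Isometry e) {a b : ℝ} (hs : s ∈ Icc a b) :
    MBtw (e a) (e s) (e b) := by
  simp only [MBtw, he.dist_eq, Real.dist_eq]
  rw [abs_of_nonpos (sub_nonpos.2 hs.1), abs_of_nonpos (sub_nonpos.2 hs.2),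
    abs_of_nonpos (sub_nonpos.2 (hs.1.trans hs.2))]
  ring

theorem FourPoint.mem_range_of_mbtw (hX : FourPoint X 0) (he : Isometry e) {a b : ℝ} (hab : a ≤ b)
    (hy : MBtw (e a) y (e b)) : y ∈ range e := by
  have hlen : dist (e a) y ≤ b - a := by
    rw [← abs_of_nonneg (sub_nonneg.2 hab), ← Real.dist_eq, dist_comm b, ← he.dist_eq]
    exact hy.dist_left_le
  have hmem : a + dist (e a) y ∈ Icc a b := ⟨by linarith [dist_nonneg (x := e a) (y := y)],
    by linarith⟩
  refine ⟨_, hX.eq_of_dist_eq (mbtw_of_isometry he hmem) hy ?_⟩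
  rw [he.dist_eq, Real.dist_eq, sub_add_cancel_left, abs_neg, abs_of_nonneg dist_nonneg]

theorem FourPoint.isometry_ext (hX : FourPoint X 0) (he : Isometry e) (he' : Isometry e')
    (hL : 0 < L) (h : ∀ n : ℤ, e (n * L) = e' (n * L)) : e = e' := by
  ext s
  obtain ⟨N, hN⟩ := exists_nat_ge (|s| / L)
  rw [div_le_iff₀ hL] at hN
  have hs : s ∈ Icc ((-N : ℤ) * L : ℝ) ((N : ℤ) * L) := by
    push_cast
    rw [neg_mul]
    exact abs_le.1 hN
  have he's := mbtw_of_isometry he' hs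
  rw [← h, ← h] at he's
  refine hX.eq_of_dist_eq (mbtw_of_isometry he hs) he's ?_
  rw [he.dist_eq, h, he'.dist_eq]

-- The witness does not depend on `N`: it is chosen on the smallest admissible segment.
theorem exists_mbtw_of_dist_eq (hgeo : GeodesicSpace X) (hL : 0 < L) {x : ℤ → X}
    (hx : ∀ m n, dist (x m) (x n) = |(m : ℝ) - n| * L) (s : ℝ) :
    ∃ r, ∀ N : ℕ, |s| ≤ N * L → MBtw (x (-N)) r (x N) ∧ dist (x (-N)) r = s + N * L := by
  have hspan (N : ℕ) : dist (x (-N)) (x N) = 2 * (N * L) := by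
    rw [hx, abs_of_nonpos (by push_cast; linarith [N.cast_nonneg (α := ℝ)])]
    push_cast
    ring
  have hstart : |s| ≤ ⌈|s| / L⌉₊ * L := (div_le_iff₀ hL).1 (Nat.le_ceil _)
  obtain ⟨r, hr, hr'⟩ := hgeo.hasSegment (x (-⌈|s| / L⌉₊)) (x ⌈|s| / L⌉₊) (s + ⌈|s| / L⌉₊ * L)
    ⟨by linarith [neg_abs_le s], by rw [hspan]; linarith [le_abs_self s]⟩
  refine ⟨r, fun N hN ↦ ?_⟩
  have hle : (⌈|s| / L⌉₊ : ℝ) ≤ N := Nat.cast_le.2 (Nat.ceil_le.2 ((div_le_iff₀ hL).2 hN))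
  have hleft : dist (x (-N)) (x (-⌈|s| / L⌉₊)) = (N - ⌈|s| / L⌉₊) * L := by
    rw [hx, abs_of_nonpos (by push_cast; linarith)]
    push_cast
    ring
  have hright : dist (x ⌈|s| / L⌉₊) (x N) = (N - ⌈|s| / L⌉₊) * L := by
    rw [hx, abs_of_nonpos (by push_cast; linarith)]
    push_cast
    ring
  have hN₀ := hspan ⌈|s| / L⌉₊
  have hN' := hspan N
  constructor <;> linarith [dist_triangle (x (-N)) (x (-⌈|s| / L⌉₊)) r,
    dist_triangle r (x ⌈|s| / L⌉₊) (x N), dist_triangle (x (-N)) r (x N)]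

theorem FourPoint.exists_isometry_of_dist_eq (hX : FourPoint X 0) (hgeo : GeodesicSpace X)
    (hL : 0 < L) {x : ℤ → X} (hx : ∀ m n, dist (x m) (x n) = |(m : ℝ) - n| * L) :
    ∃ e : ℝ → X, Isometry e ∧ ∀ n : ℤ, e (n * L) = x n := by
  choose e he using exists_mbtw_of_dist_eq hgeo hL hx
  refine ⟨e, Isometry.of_dist_eq fun s t ↦ ?_, fun n ↦ ?_⟩
  · obtain ⟨N, hN⟩ := exists_nat_ge (max |s| |t| / L)
    rw [div_le_iff₀ hL, max_le_iff] at hN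
    obtain ⟨hs, hs'⟩ := he s N hN.1
    obtain ⟨ht, ht'⟩ := he t N hN.2
    rw [hX.dist_eq_abs_sub hs ht, hs', ht', add_sub_add_right_eq_sub, Real.dist_eq]
  · obtain ⟨N, hN⟩ := exists_nat_ge |(n : ℝ)|
    obtain ⟨hlow, hupp⟩ := abs_le.1 hN
    obtain ⟨hr, hr'⟩ := he (n * L) N (by rw [abs_mul, abs_of_pos hL]; gcongr)
    have hleft := hx (-N) n
    have hright := hx n N
    have hspan := hx (-N) N
    push_cast at hleft hright hspan
    rw [abs_of_nonpos (by linarith)] at hleft hright hspan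
    refine hX.eq_of_dist_eq hr ?_ ?_ <;> linarith

theorem FourPoint.exists_axis (hX : FourPoint X 0) (hgeo : GeodesicSpace X) {τ : X ≃ᵢ X} {p : X}
    (hp : OnAxis τ p) :
    ∃ e : ℝ → X, Isometry e ∧ (∀ n : ℤ, e (n * dist p (τ p)) = (τ ^ n) p) ∧
      ∀ s, τ (e s) = e (s + dist p (τ p)) := by
  obtain ⟨e, he, hen⟩ := hX.exists_isometry_of_dist_eq hgeo hp.dist_map_pos (hp.dist_zpow hX)
  refine ⟨e, he, hen, fun s ↦ ?_⟩
  have hshift : Isometry fun s ↦ e (s + dist p (τ p)) := he.comp (isometry_add_right _)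
  refine congrFun (hX.isometry_ext (e := τ ∘ e) (τ.isometry.comp he) hshift hp.dist_map_pos
    fun n ↦ ?_) s
  have hsucc := hen (n + 1)
  push_cast at hsucc
  rw [add_one_mul, add_comm n, zpow_one_add] at hsucc
  rw [Function.comp_apply, hen, hsucc, IsometryEquiv.mul_apply]

theorem FourPoint.isHyperbolicIsom_of_translationLength_pos [Nonempty X] (hX : FourPoint X 0)
    (hgeo : GeodesicSpace X) {τ : X ≃ᵢ X} (hτ : 0 < translationLength τ) :
    IsHyperbolicIsom τ := by
  obtain ⟨p, hp⟩ := hX.exists_isAxisFoot hgeo hτ (Classical.arbitrary X)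
  have hlen := hp.translationLength_eq hX hgeo
  obtain ⟨e, he, hen, hτe⟩ := hX.exists_axis hgeo hp.toOnAxis
  rw [← hlen] at hen hτe
  refine ⟨hτ, e, fun s t ↦ by rw [he.dist_eq, Real.dist_eq], Subset.antisymm ?_ fun y hy ↦ ?_⟩
  · rintro _ ⟨s, rfl⟩
    change dist (e s) (τ (e s)) = translationLength τ
    rw [hτe, he.dist_eq, Real.dist_eq, sub_add_cancel_left, abs_neg, abs_of_pos hτ]
  · have hyaxis := (hX.onAxis_iff_mem_isomCore hgeo hτ).2 hy
    obtain ⟨N, hN⟩ := exists_nat_gt (dist y p / translationLength τ)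
    rw [div_lt_iff₀ hτ, hyaxis.translationLength_eq hX hgeo] at hN
    have hbtw := hyaxis.mbtw_zpow hX hN
    rw [← hen, ← hen] at hbtw
    refine hX.mem_range_of_mbtw he ?_ hbtw
    gcongr
    linarith [N.cast_nonneg (α := ℤ)]

end IsometricLines

section SimplicialCriterion

variable {X : Type*} [MetricSpace X] {C : Set X} {o v w x y z : X} {ε : ℝ} {k : ℤ} {γ : ℝ → X}

/-- The points whose distance from `o` is an integer multiple of `ε`, which subdivide a tree all
of whose branch points lie at such distances. -/
def radialVertices (o : X) (ε : ℝ) : Set X :=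
  {w | ∃ k : ℤ, dist o w = k * ε}

/-- Two geodesics issuing from `o` part only at points of `V`. -/
def BranchesIn (o : X) (V : Set X) : Prop :=
  ∀ ⦃c x y⦄, MBtw o c x → MBtw o c y → MBtw x c y → c = x ∨ c = y ∨ c ∈ V

theorem isClosed_radialVertices (o : X) (hε : 0 < ε) : IsClosed (radialVertices o ε) := by
  have hpre : radialVertices o ε = (fun w ↦ dist o w / ε) ⁻¹' range ((↑) : ℤ → ℝ) := by
    ext w
    simp only [radialVertices, mem_preimage, mem_range, eq_div_iff hε.ne', eq_comm]
    rfl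
  rw [hpre]
  exact Int.isClosedEmbedding_coe_real.isClosed_range.preimage (by fun_prop)

theorem FourPoint.eq_of_dist_lt_of_mem_radialVertices (hX : FourPoint X 0) (hgeo : GeodesicSpace X)
    (hε : 0 < ε) (hbranch : BranchesIn o (radialVertices o ε)) (hv : v ∈ radialVertices o ε)
    (hw : w ∈ radialVertices o ε) (hvw : dist v w < ε) : w = v := by
  obtain ⟨c, hov, how, hc⟩ := hX.exists_center hgeo o v w
  have hcV : c ∈ radialVertices o ε := by
    rcases hbranch hov how hc with rfl | rfl | h
    exacts [hv, hw, h]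
  obtain ⟨k, hk⟩ := hv
  obtain ⟨l, hl⟩ := hw
  obtain ⟨j, hj⟩ := hcV
  have hd : dist v w = ((k + l - 2 * j : ℤ) : ℝ) * ε := by
    push_cast
    linarith [dist_comm v c]
  have hlt : k + l - 2 * j < 1 := by
    have : ((k + l - 2 * j : ℤ) : ℝ) < 1 := by
      rwa [hd, mul_lt_iff_lt_one_left hε] at hvw
    exact_mod_cast this
  have hle : ((k + l - 2 * j : ℤ) : ℝ) ≤ 0 := by exact_mod_cast Int.lt_add_one_iff.1 hlt
  exact (dist_le_zero.1 (hd ▸ mul_nonpos_of_nonpos_of_nonneg hle hε.le)).symm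

theorem dist_mem_Ioo_of_isPreconnected (hC : IsPreconnected C)
    (hV : Disjoint C (radialVertices o ε)) (hx : x ∈ C)
    (hk : dist o x ∈ Ioo (k * ε) ((k + 1) * ε)) (hz : z ∈ C) :
    dist o z ∈ Ioo (k * ε) ((k + 1) * ε) := by
  have hord : OrdConnected (dist o '' C) :=
    (hC.image _ (by fun_prop : Continuous (dist o)).continuousOn).ordConnected
  have hnot (j : ℤ) : (j : ℝ) * ε ∉ dist o '' C := by
    rintro ⟨w, hw, hj⟩
    exact disjoint_left.1 hV hw ⟨j, hj⟩
  constructor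
  · by_contra! hle
    exact hnot k (hord.out ⟨z, hz, rfl⟩ ⟨x, hx, rfl⟩ ⟨hle, hk.1.le⟩)
  · by_contra! hle
    refine hnot (k + 1) (hord.out ⟨x, hx, rfl⟩ ⟨z, hz, rfl⟩ ?_)
    push_cast
    exact ⟨hk.2.le, hle⟩

theorem FourPoint.mbtw_of_isPreconnected_of_branchesIn (hX : FourPoint X 0)
    (hgeo : GeodesicSpace X) {V : Set X} (hbranch : BranchesIn o V) (hC : IsPreconnected C)
    (hV : Disjoint C V) (hx : x ∈ C) (hy : MBtw o x y) (hz : z ∈ C) (hlt : dist o z < dist o y) :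
    MBtw o z y := by
  have hconvex := hX.metricConvex_of_isPreconnected hC
  have hVc {c : X} (hc : c ∈ C) : c ∉ V := disjoint_left.1 hV hc
  obtain ⟨c, hcx, hcz, hc⟩ := hX.exists_center hgeo o x z
  rcases hbranch hcx hcz hc with rfl | rfl | h
  · obtain ⟨d, hdz, hdy, hd⟩ := hX.exists_center hgeo o z y
    have hle : dist o c ≤ dist o d := by
      linarith [dist_triangle z c y, dist_comm z c, dist_comm z d]
    have hdC : d ∈ C :=
      hconvex hx hz (hdz.trans_left_right (hX.mbtw_of_dist_le hcz hdz hle))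
    rcases hbranch hdz hdy hd with rfl | rfl | h
    · exact hdy
    · exact absurd hdz.dist_left_le hlt.not_ge
    · exact absurd h (hVc hdC)
  · exact hy.trans_left hcx
  · exact absurd h (hVc (hconvex hx hz hc))

theorem FourPoint.image_Ioo_eq (hX : FourPoint X 0) (hγ : IsGeodesicSegment γ o y) {a b : ℝ}
    (ha : 0 ≤ a) (hb : b ≤ dist o y) : γ '' Ioo a b = {z | MBtw o z y ∧ dist o z ∈ Ioo a b} := by
  have hmem {s : ℝ} (hs : s ∈ Ioo a b) : s ∈ Icc 0 (dist o y) :=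
    ⟨ha.trans hs.1.le, hs.2.le.trans hb⟩
  ext z
  constructor
  · rintro ⟨s, hs, rfl⟩
    exact ⟨hγ.mbtw (hmem hs), by rwa [hγ.dist_left (hmem hs)]⟩
  · rintro ⟨hz, hs⟩
    exact ⟨dist o z, hs, hX.eq_of_dist_eq (hγ.mbtw (hmem hs)) hz (hγ.dist_left (hmem hs))⟩

theorem FourPoint.connectedComponentIn_compl_radialVertices (hX : FourPoint X 0)
    (hgeo : GeodesicSpace X) (hbranch : BranchesIn o (radialVertices o ε))
    (hx : x ∉ radialVertices o ε) (hk : dist o x ∈ Ioo (k * ε) ((k + 1) * ε)) (hkε : 0 ≤ k * ε)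
    (hxy : MBtw o x y) (hγ : IsGeodesicSegment γ o y) (hy : dist o y = (k + 1) * ε) :
    connectedComponentIn (radialVertices o ε)ᶜ x = γ '' Ioo (k * ε) ((k + 1) * ε) := by
  have himage := hX.image_Ioo_eq hγ hkε hy.ge
  have hC : IsPreconnected (connectedComponentIn (radialVertices o ε)ᶜ x) :=
    isPreconnected_connectedComponentIn
  have hxC := mem_connectedComponentIn (mem_compl hx)
  have hV : Disjoint (connectedComponentIn (radialVertices o ε)ᶜ x) (radialVertices o ε) :=
    disjoint_compl_left.mono_left (connectedComponentIn_subset _ _)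
  refine Subset.antisymm (fun z hz ↦ ?_) ?_
  · have hzk := dist_mem_Ioo_of_isPreconnected hC hV hxC hk hz
    rw [himage]
    exact ⟨hX.mbtw_of_isPreconnected_of_branchesIn hgeo hbranch hC hV hxC hxy hz
      (hy ▸ hzk.2), hzk⟩
  · have hsub : Ioo (k * ε) ((k + 1) * ε) ⊆ Icc 0 (dist o y) := fun s hs ↦
      ⟨hkε.trans hs.1.le, hs.2.le.trans hy.ge⟩
    refine (isPreconnected_Ioo.image γ (hγ.continuousOn.mono hsub)).subset_connectedComponentIn
      (by rw [himage]; exact ⟨hxy, hk⟩) ?_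
    rintro _ ⟨s, hs, rfl⟩ ⟨j, hj⟩
    rw [hγ.dist_left (hsub hs)] at hj
    have hε : 0 < ε := by linarith [hk.1.trans hk.2]
    have hkj : (k : ℝ) < j := lt_of_mul_lt_mul_right (hj ▸ hs.1) hε.le
    have hjk : (j : ℝ) < k + 1 := lt_of_mul_lt_mul_right (hj ▸ hs.2) hε.le
    exact (Int.lt_add_one_iff.1 (by exact_mod_cast hjk)).not_gt (by exact_mod_cast hkj)

theorem FourPoint.exists_edge_of_notMem_radialVertices (hX : FourPoint X 0)
    (hgeo : GeodesicSpace X) (hε : 0 < ε) (hbranch : BranchesIn o (radialVertices o ε))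
    (hextend : ∀ x, x ≠ o → ∀ T, ∃ y, MBtw o x y ∧ T ≤ dist o y) (hx : x ∉ radialVertices o ε) :
    ∃ f : ℝ → X, (∀ s ∈ Icc 0 ε, ∀ t ∈ Icc 0 ε, dist (f s) (f t) = |s - t|) ∧
      f '' Ioo 0 ε = connectedComponentIn (radialVertices o ε)ᶜ x ∧
      f 0 ∈ radialVertices o ε ∧ f ε ∈ radialVertices o ε := by
  have hxo : x ≠ o := by
    rintro rfl
    exact hx ⟨0, by simp⟩
  obtain ⟨k, hk⟩ : ∃ k : ℤ, dist o x ∈ Ioo (k * ε) ((k + 1) * ε) :=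
    ⟨⌊dist o x / ε⌋,
      ((le_div_iff₀ hε).1 (Int.floor_le _)).lt_of_ne fun h ↦ hx ⟨_, h.symm⟩,
      (div_lt_iff₀ hε).1 (Int.lt_floor_add_one _)⟩
  have hkε : 0 ≤ k * ε := by
    have h : (0 : ℝ) < k + 1 := pos_of_mul_pos_left (dist_nonneg.trans_lt hk.2) hε.le
    have h' : 0 ≤ k := Int.lt_add_one_iff.1 (by exact_mod_cast h)
    positivity
  have hpos : 0 ≤ (k + 1) * ε := by linarith
  obtain ⟨y', hxy', hle⟩ := hextend x hxo ((k + 1) * ε)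
  obtain ⟨y, hyy', hy⟩ := hgeo.hasSegment o y' _ ⟨hpos, hle⟩
  have hxy : MBtw o x y := hX.mbtw_of_dist_le hxy' hyy' (hy ▸ hk.2.le)
  obtain ⟨γ, hγ⟩ := hgeo o y
  have hmem {s : ℝ} (hs : s ∈ Icc 0 ε) : k * ε + s ∈ Icc 0 (dist o y) :=
    ⟨add_nonneg hkε hs.1, by linarith [hs.2]⟩
  refine ⟨fun s ↦ γ (k * ε + s), fun s hs t ht ↦ ?_, ?_, ⟨k, ?_⟩, ⟨k + 1, ?_⟩⟩
  · rw [hγ.2.2 _ (hmem hs) _ (hmem ht), add_sub_add_left_eq_sub]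
  · rw [hX.connectedComponentIn_compl_radialVertices hgeo hbranch hx hk hkε hxy hγ hy,
      ← image_image γ (k * ε + ·), image_const_add_Ioo, add_zero, add_one_mul]
  · rw [hγ.dist_left (hmem (left_mem_Icc.2 hε.le)), add_zero]
  · rw [hγ.dist_left (hmem (right_mem_Icc.2 hε.le))]
    push_cast
    ring

theorem FourPoint.isMetricSimplicialTree (hX : FourPoint X 0) (hgeo : GeodesicSpace X)
    (hε : 0 < ε) (hbranch : BranchesIn o (radialVertices o ε))
    (hextend : ∀ x, x ≠ o → ∀ T, ∃ y, MBtw o x y ∧ T ≤ dist o y) : IsMetricSimplicialTree X :=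
  ⟨hX.isRTree hgeo, radialVertices o ε, isClosed_radialVertices o hε,
    fun _ hv ↦ ⟨ε, hε, fun _ hw ↦ hX.eq_of_dist_lt_of_mem_radialVertices hgeo hε hbranch hv hw⟩,
    fun _ hx ↦ ⟨ε, hε, hX.exists_edge_of_notMem_radialVertices hgeo hε hbranch hextend hx⟩⟩

end SimplicialCriterion

section MinimalSubtree

variable {X : Type*} [MetricSpace X] {K : Subgroup (X ≃ᵢ X)} {a b g h g₁ g₂ h₁ h₂ : X ≃ᵢ X}
  {c d o p q p₁ p₂ q₁ q₂ x y z : X}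

/-- The union of the segments between points of the orbit `K p`. In a `0`-hyperbolic geodesic
space it is the subtree spanned by the orbit. -/
def orbitHull (K : Subgroup (X ≃ᵢ X)) (p : X) : Set X :=
  {z | ∃ g ∈ K, ∃ h ∈ K, MBtw (g p) z (h p)}

/-- `[p, q]` is the bridge between the disjoint axes of two elements of `K`. -/
structure IsBridge (K : Subgroup (X ≃ᵢ X)) (p q : X) : Prop where
  ne : p ≠ q
  exists_left : ∃ a ∈ K, IsAxisFoot a q p
  exists_right : ∃ b ∈ K, IsAxisFoot b p q

theorem map_mem_orbitHull_self (hg : g ∈ K) (p : X) : g p ∈ orbitHull K p :=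
  ⟨g, hg, g, hg, mbtw_self_left _ _⟩

theorem self_mem_orbitHull (K : Subgroup (X ≃ᵢ X)) (p : X) : p ∈ orbitHull K p :=
  map_mem_orbitHull_self K.one_mem p

theorem map_mem_orbitHull (hg : g ∈ K) (hz : z ∈ orbitHull K p) : g z ∈ orbitHull K p := by
  obtain ⟨h, hh, k, hk, hz⟩ := hz
  exact ⟨g * h, K.mul_mem hg hh, g * k, K.mul_mem hg hk, hz.map g⟩

theorem image_orbitHull (hg : g ∈ K) : g '' orbitHull K p = orbitHull K p :=
  Subset.antisymm (image_subset_iff.2 fun _ hz ↦ map_mem_orbitHull hg hz) fun z hz ↦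
    ⟨g⁻¹ z, map_mem_orbitHull (K.inv_mem hg) hz, g.apply_symm_apply z⟩

theorem MetricConvex.orbitHull_subset {C : Set X} (hC : MetricConvex C) (h : ∀ g ∈ K, g p ∈ C) :
    orbitHull K p ⊆ C :=
  fun _ ⟨g, hg, k, hk, hz⟩ ↦ hC (h g hg) (h k hk) hz

theorem FourPoint.metricConvex_orbitHull (hX : FourPoint X 0) (K : Subgroup (X ≃ᵢ X)) (p : X) :
    MetricConvex (orbitHull K p) := by
  intro u hu v hv w hw
  rcases eq_or_ne u w with rfl | huw
  · exact hu
  rcases eq_or_ne w v with rfl | hwv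
  · exact hv
  have hbeyond {z : X} (hz : z ∈ orbitHull K p) : ∃ g ∈ K, MBtw (g p) z w := by
    obtain ⟨g, hg, h, hh, hz⟩ := hz
    exact (hX.mbtw_or hz w).elim (fun hgz ↦ ⟨g, hg, hgz⟩) fun hhz ↦ ⟨h, hh, hhz.symm⟩
  obtain ⟨g, hg, hgu⟩ := hbeyond hu
  obtain ⟨h, hh, hhv⟩ := hbeyond hv
  exact ⟨g, hg, h, hh, hX.mbtw_expand_left (hX.mbtw_expand_right hgu hw huw) hhv.symm hwv⟩

theorem OnAxis.orbitHull_subset (hX : FourPoint X 0) (hp : OnAxis a p) (ha : a ∈ K) {C : Set X}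
    (hC : IsConnected C) (hinv : ∀ g ∈ K, g '' C = C) : orbitHull K p ⊆ C := by
  have hmap {k : X ≃ᵢ X} (hk : k ∈ K) {z : X} (hz : z ∈ C) : k z ∈ C :=
    (hinv k hk).subset (mem_image_of_mem k hz)
  have hconvex := hX.metricConvex_of_isPreconnected hC.isPreconnected
  obtain ⟨y, hy⟩ := hC.nonempty
  obtain ⟨n, hn⟩ := exists_nat_gt (dist p y / dist p (a p))
  rw [div_lt_iff₀ hp.dist_map_pos] at hn
  have hpC : p ∈ C := hconvex (hmap (K.zpow_mem ha _) hy) (hmap (K.zpow_mem ha _) hy)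
    (hp.mbtw_zpow hX hn)
  exact hconvex.orbitHull_subset fun k hk ↦ hmap hk hpC

theorem FourPoint.iInf_orbitHull_dist_map (hX : FourPoint X 0) (hgeo : GeodesicSpace X)
    (hg : g ∈ K) (p : X) :
    ⨅ z : orbitHull K p, dist (z : X) (g (z : X)) = translationLength g := by
  have : Nonempty (orbitHull K p) := ⟨⟨p, self_mem_orbitHull K p⟩⟩
  obtain ⟨m, hm, hpm⟩ := (hgeo.hasSegment p (g p)).exists_midpoint
  have hmK : m ∈ orbitHull K p := ⟨1, K.one_mem, g, hg, hm⟩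
  refine le_antisymm ?_ (le_ciInf fun z ↦ translationLength_le_dist g (z : X))
  rw [← show dist m (g m) = translationLength g from hX.midpoint_mem_isomCore hgeo g hm hpm]
  exact ciInf_le (f := fun z : orbitHull K p ↦ dist (z : X) (g (z : X)))
    ⟨0, forall_mem_range.2 fun _ ↦ dist_nonneg⟩ ⟨m, hmK⟩

theorem OnAxis.conj (h : OnAxis a p) (k : X ≃ᵢ X) : OnAxis (k * a * k⁻¹) (k p) where
  ne := by simpa using h.ne
  mbtw := by simpa using h.mbtw.map k

theorem IsAxisFoot.conj (h : IsAxisFoot a c p) (k : X ≃ᵢ X) :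
    IsAxisFoot (k * a * k⁻¹) (k c) (k p) where
  toOnAxis := h.toOnAxis.conj k
  mbtw_map := by simpa using h.mbtw_map.map k
  mbtw_inv := by simpa [mul_assoc] using h.mbtw_inv.map k

theorem OnAxis.exists_mem_orbitHull_mbtw (hX : FourPoint X 0) (hp : OnAxis a p) (ha : a ∈ K)
    (hx : x ∈ orbitHull K p) (o : X) (T : ℝ) : ∃ y ∈ orbitHull K p, MBtw o x y ∧ T ≤ dist o y := by
  obtain ⟨k, hk, hox⟩ : ∃ k ∈ K, MBtw o x (k p) := by
    obtain ⟨g, hg, h, hh, hx⟩ := hx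
    exact (hX.mbtw_or hx o).elim (fun h' ↦ ⟨g, hg, h'.symm⟩) fun h' ↦ ⟨h, hh, h'⟩
  have hkp := hp.conj k
  have hka : k * a * k⁻¹ ∈ K := K.mul_mem (K.mul_mem hk ha) (K.inv_mem hk)
  set τ := k * a * k⁻¹
  obtain ⟨n, hn⟩ := exists_nat_gt (max T 0 / dist (k p) (τ (k p)))
  rw [div_lt_iff₀ hkp.dist_map_pos, max_lt_iff] at hn
  have hmem (j : ℤ) : (τ ^ j) (k p) ∈ orbitHull K p :=
    map_mem_orbitHull (K.zpow_mem hka j) (map_mem_orbitHull_self hk p)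
  have hdist (j : ℤ) : dist (k p) ((τ ^ j) (k p)) = |(j : ℝ)| * dist (k p) (τ (k p)) := by
    simpa using hkp.dist_zpow hX 0 j
  have hfar {j : ℤ} (hj : |(j : ℝ)| = n) (h : MBtw o (k p) ((τ ^ j) (k p))) :
      ∃ y ∈ orbitHull K p, MBtw o x y ∧ T ≤ dist o y := by
    refine ⟨_, hmem j, h.trans_left hox, ?_⟩
    rw [← h, hdist, hj]
    linarith [dist_nonneg (x := o) (y := k p)]
  rcases hX.mbtw_or (hkp.mbtw_zpow hX ((dist_self _).trans_lt hn.2)) o with h | h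
  · exact hfar (by simp) h.symm
  · exact hfar (by simp) h

theorem IsBridge.map (hpq : IsBridge K p q) (hg : g ∈ K) : IsBridge K (g p) (g q) where
  ne := g.injective.ne hpq.ne
  exists_left := by
    obtain ⟨a, ha, hap⟩ := hpq.exists_left
    exact ⟨_, K.mul_mem (K.mul_mem hg ha) (K.inv_mem hg), hap.conj g⟩
  exists_right := by
    obtain ⟨b, hb, hbq⟩ := hpq.exists_right
    exact ⟨_, K.mul_mem (K.mul_mem hg hb) (K.inv_mem hg), hbq.conj g⟩

theorem IsAxisFoot.conj_of_not_mbtw (hX : FourPoint X 0) (ha : IsAxisFoot a q p)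
    (hb : IsAxisFoot b p q) (hpq : p ≠ q) (hc : ¬ MBtw c p (a p)) :
    IsAxisFoot (a⁻¹ * b * a) c (a⁻¹ q) ∧ MBtw (a⁻¹ q) p c := by
  have hpc : MBtw (a⁻¹ p) p c := (hX.mbtw_or ha.mbtw_inv_map c).resolve_right hc
  have hqp : MBtw (a⁻¹ q) (a⁻¹ p) p := by simpa using ha.mbtw_map.map a⁻¹
  have hne : a⁻¹ p ≠ p := ha.inv.ne
  have hfoot : IsAxisFoot (a⁻¹ * b * a) (a⁻¹ p) (a⁻¹ q) := by simpa using hb.conj a⁻¹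
  exact ⟨hfoot.of_mbtw hX ((a⁻¹).injective.ne hpq) (hX.mbtw_expand_left hqp hpc hne),
    hX.mbtw_expand_right hqp hpc hne⟩

theorem IsBridge.exists_isAxisFoot_of_not_mbtw (hX : FourPoint X 0) (hpq : IsBridge K p q)
    (hx : ¬ MBtw x c p) : ∃ g ∈ K, ∃ r, IsAxisFoot g c r ∧ ¬ MBtw x c r := by
  obtain ⟨a, ha, hap⟩ := hpq.exists_left
  obtain ⟨b, hb, hbq⟩ := hpq.exists_right
  have hconj {a : X ≃ᵢ X} (ha : a ∈ K) (hap : IsAxisFoot a q p) (hc : ¬ MBtw c p (a p)) :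
      ∃ g ∈ K, ∃ r, IsAxisFoot g c r ∧ ¬ MBtw x c r := by
    obtain ⟨hfoot, hpc⟩ := hap.conj_of_not_mbtw hX hbq hpq.ne hc
    refine ⟨_, K.mul_mem (K.mul_mem (K.inv_mem ha) hb) ha, _, hfoot, fun hxc ↦ hx ?_⟩
    refine (hX.mbtw_or hxc p).resolve_right fun hpc' ↦ hx ?_
    obtain rfl : c = p := (hpc'.symm.trans_left_right hpc).eq_of_self
    exact mbtw_self_right _ _
  by_cases hc : MBtw c p (a p)
  · by_cases hc' : MBtw c p (a⁻¹ p)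
    · exact ⟨a, ha, p, ⟨hap.toOnAxis, hc, hc'⟩, hx⟩
    · exact hconj (K.inv_mem ha) hap.inv hc'
  · exact hconj ha hap hc

theorem IsBridge.exists_isAxisFoot_toward (hX : FourPoint X 0) (hpq : IsBridge K p q)
    (hx : x ∈ orbitHull K p) (hcx : c ≠ x) : ∃ g ∈ K, ∃ r, IsAxisFoot g c r ∧ ¬ MBtw x c r := by
  obtain ⟨k, hk, hxk⟩ : ∃ k ∈ K, ¬ MBtw x c (k p) := by
    by_contra! hall
    obtain ⟨g, hg, h, hh, hx⟩ := hx
    exact hcx (hx.eq_of_mbtw_of_mbtw (hall g hg).symm (hall h hh).symm)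
  exact (hpq.map hk).exists_isAxisFoot_of_not_mbtw hX hxk

theorem IsBridge.right_mem_orbitHull (hX : FourPoint X 0) (hpq : IsBridge K p q) :
    q ∈ orbitHull K p := by
  obtain ⟨b, hb, hbq⟩ := hpq.exists_right
  have hqp : MBtw q (b q) (b p) := by simpa using hbq.mbtw_inv.symm.map b
  exact ⟨1, K.one_mem, b, hb, hX.mbtw_expand_left hbq.mbtw_map hqp hbq.ne.symm⟩

theorem IsBridge.exists_tripod (hX : FourPoint X 0) (hpq : IsBridge K p q) (c : X) :
    ∃ z₁ ∈ orbitHull K p, ∃ z₂ ∈ orbitHull K p, p ≠ z₁ ∧ p ≠ z₂ ∧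
      MBtw z₁ p c ∧ MBtw z₂ p c ∧ MBtw z₁ p z₂ := by
  obtain ⟨a, ha, hap⟩ := hpq.exists_left
  have hq := hpq.right_mem_orbitHull hX
  have haK := map_mem_orbitHull_self ha p
  have haK' := map_mem_orbitHull_self (K.inv_mem ha) p
  by_cases h₁ : MBtw (a p) p c
  · by_cases h₂ : MBtw q p c
    · exact ⟨_, haK, q, hq, hap.ne.symm, hpq.ne, h₁, h₂, hap.mbtw_map.symm⟩
    · exact ⟨_, haK, _, haK', hap.ne.symm, hap.inv.ne.symm, h₁,
        ((hX.mbtw_or hap.mbtw_inv c).resolve_left h₂).symm, hap.mbtw_inv_map.symm⟩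
  · exact ⟨q, hq, _, haK', hpq.ne, hap.inv.ne.symm,
      ((hX.mbtw_or hap.mbtw_map.symm c).resolve_left h₁).symm,
      ((hX.mbtw_or hap.mbtw_inv_map.symm c).resolve_left h₁).symm, hap.mbtw_inv⟩

theorem IsBridge.exists_isAxisFoot_of_tripod (hX : FourPoint X 0) (hpq : IsBridge K p q)
    (hx : x ∈ orbitHull K p) (hy : y ∈ orbitHull K p) (hcx : c ≠ x) (hcy : c ≠ y)
    (hxo : MBtw x c o) (hyo : MBtw y c o) (hxy : MBtw x c y) :
    ∃ g₁ ∈ K, ∃ g₂ ∈ K, ∃ p₁ p₂, IsAxisFoot g₁ c p₁ ∧ IsAxisFoot g₂ c p₂ ∧ c ≠ p₁ ∧ c ≠ p₂ ∧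
      MBtw p₁ c o ∧ MBtw p₂ c o ∧ MBtw p₁ c p₂ := by
  obtain ⟨g₁, hg₁, p₁, hp₁, hx₁⟩ := hpq.exists_isAxisFoot_toward hX hx hcx
  obtain ⟨g₂, hg₂, p₂, hp₂, hy₂⟩ := hpq.exists_isAxisFoot_toward hX hy hcy
  have hne {u r : X} (h : ¬ MBtw u c r) : c ≠ r := fun e ↦ h (e ▸ mbtw_self_right _ _)
  have hp₁y : MBtw p₁ c y := (hX.mbtw_or hxy p₁).resolve_left hx₁
  exact ⟨g₁, hg₁, g₂, hg₂, p₁, p₂, hp₁, hp₂, hne hx₁, hne hy₂,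
    (hX.mbtw_or hxo p₁).resolve_left hx₁, (hX.mbtw_or hyo p₂).resolve_left hy₂,
    ((hX.mbtw_or hp₁y.symm p₂).resolve_left hy₂).symm⟩

theorem IsAxisFoot.translationLength_mul_of_mbtw (hX : FourPoint X 0) (hgeo : GeodesicSpace X)
    (hg : IsAxisFoot g c p) (hh : IsAxisFoot h d q) (hcp : c ≠ p) (hdq : d ≠ q)
    (hc : MBtw p c q) (hd : MBtw p d q) :
    translationLength (g * h) = translationLength g + translationLength h + 2 * dist p q := by
  refine (hg.of_mbtw hX hcp hc).translationLength_mul hX hgeo (hh.of_mbtw hX hdq hd.symm) ?_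
  rintro rfl
  exact hcp hc.eq_of_self

-- The segment `[c, o]` is the crossbar of the H spanned by four axes: the sum of the lengths of
-- the diagonals minus that of the sides counts it twice, and product lengths count distances twice.
theorem four_mul_dist_eq_of_isAxisFoot (hX : FourPoint X 0) (hgeo : GeodesicSpace X)
    (hg₁ : IsAxisFoot g₁ c p₁) (hg₂ : IsAxisFoot g₂ c p₂) (hh₁ : IsAxisFoot h₁ o q₁)
    (hh₂ : IsAxisFoot h₂ o q₂) (hp₁ : c ≠ p₁) (hp₂ : c ≠ p₂) (hq₁ : o ≠ q₁) (hq₂ : o ≠ q₂)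
    (hco : c ≠ o) (hp₁o : MBtw p₁ c o) (hp₂o : MBtw p₂ c o) (hp : MBtw p₁ c p₂)
    (hq₁c : MBtw q₁ o c) (hq₂c : MBtw q₂ o c) (hq : MBtw q₁ o q₂) :
    4 * dist o c = translationLength (g₁ * h₁) + translationLength (g₂ * h₂)
      - translationLength (g₁ * g₂) - translationLength (h₁ * h₂) := by
  rw [hg₁.translationLength_mul_of_mbtw hX hgeo hg₂ hp₁ hp₂ hp hp,
    hh₁.translationLength_mul_of_mbtw hX hgeo hh₂ hq₁ hq₂ hq hq,
    hg₁.translationLength_mul_of_mbtw hX hgeo hh₁ hp₁ hq₁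
      (hX.mbtw_expand_left hp₁o hq₁c.symm hco) (hX.mbtw_expand_right hp₁o hq₁c.symm hco),
    hg₂.translationLength_mul_of_mbtw hX hgeo hh₂ hp₂ hq₂
      (hX.mbtw_expand_left hp₂o hq₂c.symm hco) (hX.mbtw_expand_right hp₂o hq₂c.symm hco)]
  have h₁ := hX.dist_of_mbtw_of_mbtw hp₁o hq₁c.symm (dist_pos.2 hco)
  have h₂ := hX.dist_of_mbtw_of_mbtw hp₂o hq₂c.symm (dist_pos.2 hco)
  linarith [dist_comm c p₂, dist_comm o c, dist_comm o q₁]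

theorem IsBridge.exists_four_mul_dist_eq_intCast (hX : FourPoint X 0) (hgeo : GeodesicSpace X)
    (hpq : IsBridge K p q) (hint : ∀ g ∈ K, ∃ k : ℤ, translationLength g = k)
    (hx : x ∈ orbitHull K p) (hy : y ∈ orbitHull K p) (hcx : c ≠ x) (hcy : c ≠ y)
    (hpx : MBtw p c x) (hpy : MBtw p c y) (hxy : MBtw x c y) : ∃ k : ℤ, 4 * dist p c = k := by
  rcases eq_or_ne c p with rfl | hcp
  · exact ⟨0, by simp⟩
  obtain ⟨g₁, hg₁, g₂, hg₂, p₁, p₂, hp₁, hp₂, hne₁, hne₂, hp₁p, hp₂p, hp₁p₂⟩ :=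
    hpq.exists_isAxisFoot_of_tripod hX hx hy hcx hcy hpx.symm hpy.symm hxy
  obtain ⟨z₁, hz₁, z₂, hz₂, hpz₁, hpz₂, hz₁c, hz₂c, hz⟩ := hpq.exists_tripod hX c
  obtain ⟨h₁, hh₁, h₂, hh₂, q₁, q₂, hq₁, hq₂, hne₁', hne₂', hq₁c, hq₂c, hq₁q₂⟩ :=
    hpq.exists_isAxisFoot_of_tripod hX hz₁ hz₂ hpz₁ hpz₂ hz₁c hz₂c hz
  obtain ⟨k₁, hk₁⟩ := hint _ (K.mul_mem hg₁ hh₁)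
  obtain ⟨k₂, hk₂⟩ := hint _ (K.mul_mem hg₂ hh₂)
  obtain ⟨k₃, hk₃⟩ := hint _ (K.mul_mem hg₁ hg₂)
  obtain ⟨k₄, hk₄⟩ := hint _ (K.mul_mem hh₁ hh₂)
  refine ⟨k₁ + k₂ - k₃ - k₄, ?_⟩
  rw [four_mul_dist_eq_of_isAxisFoot hX hgeo hp₁ hp₂ hq₁ hq₂ hne₁ hne₂ hne₁' hne₂' hcp hp₁p hp₂p
    hp₁p₂ hq₁c hq₂c hq₁q₂, hk₁, hk₂, hk₃, hk₄]
  push_cast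
  rfl

theorem IsBridge.isMetricSimplicialTree_orbitHull (hX : FourPoint X 0) (hgeo : GeodesicSpace X)
    (hpq : IsBridge K p q) (hint : ∀ g ∈ K, ∃ k : ℤ, translationLength g = k) :
    IsMetricSimplicialTree (orbitHull K p) := by
  obtain ⟨a, ha, hap⟩ := hpq.exists_left
  refine (hX.subtype _).isMetricSimplicialTree (o := ⟨p, self_mem_orbitHull K p⟩) (ε := 1 / 4)
    ((hX.metricConvex_orbitHull K p).geodesicSpace hX hgeo) (by norm_num) ?_ ?_
  · intro c x y hcx hcy hxy
    by_contra! hne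
    obtain ⟨k, hk⟩ := hpq.exists_four_mul_dist_eq_intCast hX hgeo hint x.2 y.2
      (Subtype.coe_injective.ne hne.1) (Subtype.coe_injective.ne hne.2.1) hcx hcy hxy
    exact hne.2.2 ⟨k, by rw [← hk, Subtype.dist_eq]; ring⟩
  · intro x _ T
    obtain ⟨y, hy, hxy, hT⟩ := hap.toOnAxis.exists_mem_orbitHull_mbtw hX ha x.2 p T
    exact ⟨⟨y, hy⟩, hxy, hT⟩

theorem FourPoint.exists_minimal_simplicial_subtree [Nonempty X] (hX : FourPoint X 0)
    (hgeo : GeodesicSpace X) (ha : a ∈ K) (hb : b ∈ K) (hℓa : 0 < translationLength a)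
    (hℓb : 0 < translationLength b) (hdisj : Disjoint (isomCore a) (isomCore b))
    (hint : ∀ g ∈ K, ∃ k : ℤ, translationLength g = k) :
    ∃ W : Set X, IsConnected W ∧ (∀ g ∈ K, g '' W = W) ∧
      (∀ C : Set X, IsConnected C → (∀ g ∈ K, g '' C = C) → W ⊆ C) ∧
      IsMetricSimplicialTree W ∧
      ∀ g ∈ K, ⨅ z : W, dist (z : X) (g (z : X)) = translationLength g := by
  obtain ⟨p, q, hne, hap, hbq⟩ := hX.exists_bridge hgeo hℓa hℓb hdisj
  have hpq : IsBridge K p q := ⟨hne, ⟨a, ha, hap⟩, ⟨b, hb, hbq⟩⟩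
  exact ⟨orbitHull K p,
    ⟨⟨p, self_mem_orbitHull K p⟩, (hX.metricConvex_orbitHull K p).isPreconnected hgeo⟩,
    fun _ hg ↦ image_orbitHull hg, fun _ hC hinv ↦ hap.toOnAxis.orbitHull_subset hX ha hC hinv,
    hpq.isMetricSimplicialTree_orbitHull hX hgeo hint,
    fun _ hg ↦ hX.iInf_orbitHull_dist_map hgeo hg p⟩

end MinimalSubtree

section ThinTriangles

variable {H : Type*} [MetricSpace H] {Δ : ℝ} {γ : ℝ → H} {a b p x z : H}

theorem IsGeodesicSegment.dist_add_dist_le_of_infDist_le (hγ : IsGeodesicSegment γ a b)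
    (hp : infDist p (segImage γ a b) ≤ Δ) : dist a p + dist p b ≤ dist a b + 2 * Δ := by
  obtain ⟨w, hw, hpw⟩ :=
    hγ.isCompact_segImage.exists_infDist_eq_dist ⟨a, hγ.left_mem_segImage⟩ p
  have hw' := hγ.mbtw_of_mem hw
  have hap := dist_triangle_right a p w
  have hpb := dist_triangle p w b
  linarith

-- The part of `[x, z]` near `[y, x]` and the part near `[z, y]` are closed, nonempty and cover
-- `[x, z]`, so they meet.
theorem ThinTriangles.exists_center (hthin : ThinTriangles H Δ) (hgeo : GeodesicSpace H)
    (hγ : IsGeodesicSegment γ x z) (y : H) :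
    ∃ s ∈ Icc 0 (dist x z), dist x (γ s) + dist (γ s) y ≤ dist x y + 2 * Δ ∧
      dist y (γ s) + dist (γ s) z ≤ dist y z + 2 * Δ := by
  obtain ⟨γzy, hzy⟩ := hgeo z y
  obtain ⟨γyx, hyx⟩ := hgeo y x
  have isClosed_near (K : Set H) : IsClosed {w | infDist w K ≤ Δ} :=
    isClosed_le (continuous_infDist_pt K) continuous_const
  have near_of_mem {K : Set H} {w : H} (hw : w ∈ K) : infDist w K ≤ Δ := by
    obtain ⟨v, -, hv⟩ := hthin x z y γ γzy γyx hγ hzy hyx x hγ.left_mem_segImage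
    exact (infDist_zero_of_mem hw).trans_le (dist_nonneg.trans hv)
  have cover : segImage γ x z ⊆
      {w | infDist w (segImage γyx y x) ≤ Δ} ∪ {w | infDist w (segImage γzy z y) ≤ Δ} := by
    intro w hw
    obtain ⟨v, hv | hv, hwv⟩ := hthin x z y γ γzy γyx hγ hzy hyx w hw
    · exact Or.inr ((infDist_le_dist_of_mem hv).trans hwv)
    · exact Or.inl ((infDist_le_dist_of_mem hv).trans hwv)
  obtain ⟨_, ⟨s, hs, rfl⟩, hsyx, hszy⟩ := isPreconnected_closed_iff.1 hγ.isPreconnected_segImage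
    _ _ (isClosed_near _) (isClosed_near _) cover
    ⟨x, hγ.left_mem_segImage, near_of_mem hyx.right_mem_segImage⟩
    ⟨z, hγ.right_mem_segImage, near_of_mem hzy.left_mem_segImage⟩
  refine ⟨s, hs, ?_, ?_⟩
  · linarith [hyx.dist_add_dist_le_of_infDist_le hsyx, dist_comm x y, dist_comm x (γ s),
      dist_comm y (γ s)]
  · linarith [hzy.dist_add_dist_le_of_infDist_le hszy, dist_comm y z, dist_comm z (γ s),
      dist_comm y (γ s)]

theorem ThinTriangles.fourPoint (hthin : ThinTriangles H Δ) (hgeo : GeodesicSpace H) :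
    FourPoint H (4 * Δ) := by
  intro x y z w
  obtain ⟨γ, hγ⟩ := hgeo x z
  obtain ⟨s, hs, hxsy, hysz⟩ := hthin.exists_center hgeo hγ y
  obtain ⟨t, ht, hxtw, hwtz⟩ := hthin.exists_center hgeo hγ w
  have hst := hγ.2.2 s hs t ht
  have hyw := dist_triangle4 y (γ s) (γ t) w
  have hxs := hγ.dist_left hs
  have hxt := hγ.dist_left ht
  have hsz := hγ.mbtw hs
  have htz := hγ.mbtw ht
  rw [dist_comm w (γ t), dist_comm w z] at hwtz
  rw [dist_comm (γ s) y] at hxsy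
  rw [← sub_le_iff_le_add]
  rcases le_total s t with h | h
  · rw [abs_of_nonpos (by linarith)] at hst
    exact le_max_of_le_right (by linarith)
  · rw [abs_of_nonneg (by linarith)] at hst
    exact le_max_of_le_left (by linarith)

end ThinTriangles

section CompleteGraphPoints

variable {G : Type*}

theorem kpt_zero (u v : G) : kpt u v 0 ⟨le_rfl, zero_le_one⟩ = vtx u := by
  apply Subtype.ext
  funext x
  simp [kpt, vtx, deltaComb]

theorem kpt_one (u v : G) : kpt u v 1 ⟨zero_le_one, le_rfl⟩ = vtx v := by
  apply Subtype.ext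
  funext x
  simp [kpt, vtx, deltaComb]

theorem kpt_one_sub (u v : G) {t : ℝ} (ht : t ∈ Icc (0 : ℝ) 1) (ht' : 1 - t ∈ Icc (0 : ℝ) 1) :
    kpt v u (1 - t) ht' = kpt u v t ht := by
  apply Subtype.ext
  funext x
  simp only [kpt, deltaComb]
  ring

theorem exists_eq_kpt (p : KG G) : ∃ u v t, ∃ ht : t ∈ Icc (0 : ℝ) 1, p = kpt u v t ht := by
  obtain ⟨_, u, v, t, ht, rfl⟩ := p
  exact ⟨u, v, t, ht, rfl⟩

noncomputable instance [Group G] : MulAction G (KG G) where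
  smul := leftMulKG
  one_smul p := Subtype.ext <| funext fun x ↦ by
    change p.1 (1⁻¹ * x) = p.1 x
    rw [inv_one, one_mul]
  mul_smul g h p := Subtype.ext <| funext fun x ↦ by
    change p.1 ((g * h)⁻¹ * x) = p.1 (h⁻¹ * (g⁻¹ * x))
    rw [mul_inv_rev, mul_assoc]

variable {X : Type*} [MetricSpace X] {f : KG G → X}

theorem StraightOnKG.dist_vtx_kpt (hf : StraightOnKG f) (u v : G) {t : ℝ}
    (ht : t ∈ Icc (0 : ℝ) 1) :
    dist (f (vtx u)) (f (kpt u v t ht)) = t * dist (f (vtx u)) (f (vtx v)) := by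
  have h := hf u v t ht
  rwa [kpt_zero, kpt_one] at h

theorem StraightOnKG.dist_kpt_vtx (hf : StraightOnKG f) (u v : G) {t : ℝ}
    (ht : t ∈ Icc (0 : ℝ) 1) :
    dist (f (kpt u v t ht)) (f (vtx v)) = (1 - t) * dist (f (vtx u)) (f (vtx v)) := by
  rw [← kpt_one_sub u v ht (Icc.mem_iff_one_sub_mem.1 ht), dist_comm, hf.dist_vtx_kpt, dist_comm]

theorem StraightOnKG.mbtw_kpt (hf : StraightOnKG f) (u v : G) {t : ℝ} (ht : t ∈ Icc (0 : ℝ) 1) :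
    MBtw (f (vtx u)) (f (kpt u v t ht)) (f (vtx v)) := by
  rw [MBtw, hf.dist_vtx_kpt, hf.dist_kpt_vtx]
  ring

theorem StraightOnKG.hasSegment_vtx (hf : StraightOnKG f) (u v : G) :
    HasSegment (f (vtx u)) (f (vtx v)) := by
  rintro s ⟨hs0, hs⟩
  have ht : s / dist (f (vtx u)) (f (vtx v)) ∈ Icc (0 : ℝ) 1 :=
    ⟨div_nonneg hs0 dist_nonneg, div_le_one_of_le₀ hs dist_nonneg⟩
  refine ⟨f (kpt u v _ ht), hf.mbtw_kpt u v ht, ?_⟩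
  rw [hf.dist_vtx_kpt]
  exact div_mul_cancel_of_imp fun h ↦ (hs.trans_eq h).antisymm hs0

-- A point `q` and an edge `[u, v]` through `p`: one of `[u, q]`, `[v, q]` passes through `p`, so a
-- segment at `p` is part of a segment at a vertex.
theorem StraightOnKG.geodesicSpace (hf : StraightOnKG f) (hX : FourPoint X 0)
    (hsurj : Function.Surjective f) : GeodesicSpace X := by
  have of_vtx {q : X} (hq : ∀ u, HasSegment (f (vtx u)) q) (p : X) : HasSegment p q := by
    obtain ⟨k, rfl⟩ := hsurj p
    obtain ⟨u, v, t, ht, rfl⟩ := exists_eq_kpt k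
    rcases hX.mbtw_or (hf.mbtw_kpt u v ht) q with h | h
    · exact (hq u).of_mbtw hX h
    · exact (hq v).of_mbtw hX h.symm
  have hvtx (u : G) (p : X) : HasSegment p (f (vtx u)) := of_vtx (hf.hasSegment_vtx · u) p
  exact hX.geodesicSpace fun a b ↦ of_vtx (fun u ↦ (hvtx u b).symm) a

end CompleteGraphPoints

/-- `d` is the limit along `l` of the pseudo-metrics on `Y` induced by the maps `f i`, rescaled by
the factors `c i`. -/
def RescaledLimit {I Y : Type*} {X : I → Type*} [∀ i, PseudoMetricSpace (X i)] (l : Filter I)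
    (c : I → ℝ) (f : ∀ i, Y → X i) (d : Y → Y → ℝ) : Prop :=
  ∀ p q, Tendsto (fun i ↦ c i * dist (f i p) (f i q)) l (𝓝 (d p q))

section RescaledLimit

variable {I Y : Type*} {l : Filter I} {c : I → ℝ} {δ : ℝ}

section Pseudometric

variable {X : I → Type*} [∀ i, PseudoMetricSpace (X i)] {f : ∀ i, Y → X i} {d : Y → Y → ℝ}

theorem RescaledLimit.self [l.NeBot] (h : RescaledLimit l c f d) (p : Y) : d p p = 0 :=
  tendsto_nhds_unique (h p p) (by simp only [dist_self, mul_zero, tendsto_const_nhds])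

theorem RescaledLimit.symm [l.NeBot] (h : RescaledLimit l c f d) (p q : Y) : d p q = d q p :=
  tendsto_nhds_unique (h p q) (by simpa only [dist_comm] using h q p)

theorem RescaledLimit.triangle [l.NeBot] (h : RescaledLimit l c f d) (hc : ∀ i, 0 ≤ c i)
    (p q r : Y) : d p r ≤ d p q + d q r :=
  le_of_tendsto_of_tendsto' (h p r) ((h p q).add (h q r)) fun i ↦ by
    rw [← mul_add]
    exact mul_le_mul_of_nonneg_left (dist_triangle _ _ _) (hc i)

theorem RescaledLimit.map_eq [l.NeBot] (h : RescaledLimit l c f d) {φ : Y → Y}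
    {τ : ∀ i, X i → X i} (hτ : ∀ i, Isometry (τ i)) (hφ : ∀ i p, f i (φ p) = τ i (f i p))
    (p q : Y) : d (φ p) (φ q) = d p q :=
  tendsto_nhds_unique (h _ _) (by simpa only [hφ, (hτ _).dist_eq] using h p q)

theorem RescaledLimit.four_point_le [l.NeBot] (h : RescaledLimit l c f d)
    (hX : ∀ i, FourPoint (X i) δ) (hc : ∀ i, 0 ≤ c i) (hc0 : Tendsto c l (𝓝 0)) (p q r s : Y) :
    d p r + d q s ≤ max (d p q + d r s) (d p s + d q r) := by
  have hbound := (((h p q).add (h r s)).max ((h p s).add (h q r))).add (hc0.mul_const δ)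
  rw [zero_mul, add_zero] at hbound
  refine le_of_tendsto_of_tendsto' ((h p r).add (h q s)) hbound fun i ↦ ?_
  have hi := mul_le_mul_of_nonneg_left (hX i (f i p) (f i q) (f i r) (f i s)) (hc i)
  simpa only [mul_add, mul_max_of_nonneg _ _ (hc i)] using hi

theorem tendsto_mul_dist_of_dist_eq (hX : ∀ i, FourPoint (X i) δ) (hc : ∀ i, 0 ≤ c i)
    (hc0 : Tendsto c l (𝓝 0)) {a b p q : ∀ i, X i} {t A B C : ℝ}
    (hap : ∀ i, dist (a i) (p i) = t * dist (a i) (b i))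
    (hpb : ∀ i, dist (p i) (b i) = (1 - t) * dist (a i) (b i))
    (hA : Tendsto (fun i ↦ c i * dist (a i) (q i)) l (𝓝 A))
    (hB : Tendsto (fun i ↦ c i * dist (b i) (q i)) l (𝓝 B))
    (hC : Tendsto (fun i ↦ c i * dist (a i) (b i)) l (𝓝 C)) :
    Tendsto (fun i ↦ c i * dist (p i) (q i)) l (𝓝 (max (A - t * C) (B - (1 - t) * C))) := by
  have hlower := (hA.sub (hC.const_mul t)).max (hB.sub (hC.const_mul (1 - t)))
  have hupper := hlower.add (hc0.mul_const δ)
  rw [zero_mul, add_zero] at hupper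
  have rescale (i : I) : max (c i * dist (a i) (q i) - t * (c i * dist (a i) (b i)))
      (c i * dist (b i) (q i) - (1 - t) * (c i * dist (a i) (b i))) =
      c i * max (dist (a i) (q i) - dist (a i) (p i)) (dist (b i) (q i) - dist (p i) (b i)) := by
    rw [mul_max_of_nonneg _ _ (hc i), hap, hpb]
    ring_nf
  refine tendsto_of_tendsto_of_tendsto_of_le_of_le hlower hupper (fun i ↦ ?_) fun i ↦ ?_
  · refine (rescale i).trans_le (mul_le_mul_of_nonneg_left (max_le ?_ ?_) (hc i))
    · linarith [dist_triangle (a i) (p i) (q i)]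
    · linarith [dist_triangle_left (b i) (q i) (p i)]
  · have hbtw : MBtw (a i) (p i) (b i) := by
      rw [MBtw, hap, hpb]
      ring
    refine (mul_le_mul_of_nonneg_left ((hX i).dist_le_of_mbtw hbtw (q i)) (hc i)).trans_eq ?_
    rw [mul_add, ← rescale]

end Pseudometric

section Quotient

variable {Γ : Type*} [MetricSpace Γ] {π : Y → Γ} {X : I → Type*} [∀ i, MetricSpace (X i)]

theorem RescaledLimit.fourPoint [l.NeBot] {f : ∀ i, Y → X i}
    (h : RescaledLimit l c f fun p q ↦ dist (π p) (π q)) (hX : ∀ i, FourPoint (X i) δ)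
    (hc : ∀ i, 0 ≤ c i) (hc0 : Tendsto c l (𝓝 0)) (hπ : Function.Surjective π) :
    FourPoint Γ 0 :=
  hπ.forall₂.2 fun p q ↦ hπ.forall₂.2 fun r s ↦
    (h.four_point_le hX hc hc0 p q r s).trans_eq (add_zero _).symm

theorem RescaledLimit.straightOnKG [l.NeBot] {G : Type*} {π : KG G → Γ} {f : ∀ i, KG G → X i}
    (h : RescaledLimit l c f fun p q ↦ dist (π p) (π q)) (hf : ∀ i, StraightOnKG (f i)) :
    StraightOnKG π := fun u v t ht ↦
  tendsto_nhds_unique (h _ _) <| by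
    simpa only [hf _ u v t ht, mul_left_comm _ t] using (h _ _).const_mul t

end Quotient

section StraightMaps

variable {G : Type*} {X : I → Type*} [∀ i, MetricSpace (X i)] {f : ∀ i, KG G → X i}

theorem StraightOnKG.exists_tendsto_mul_dist (hX : ∀ i, FourPoint (X i) δ) (hc : ∀ i, 0 ≤ c i)
    (hc0 : Tendsto c l (𝓝 0)) (hf : ∀ i, StraightOnKG (f i))
    (hvtx : ∀ u v, ∃ D, Tendsto (fun i ↦ c i * dist (f i (vtx u)) (f i (vtx v))) l (𝓝 D))
    {q : ∀ i, X i} (hq : ∀ u, ∃ A, Tendsto (fun i ↦ c i * dist (f i (vtx u)) (q i)) l (𝓝 A))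
    (p : KG G) : ∃ L, Tendsto (fun i ↦ c i * dist (f i p) (q i)) l (𝓝 L) := by
  obtain ⟨u, v, t, ht, rfl⟩ := exists_eq_kpt p
  obtain ⟨A, hA⟩ := hq u
  obtain ⟨B, hB⟩ := hq v
  obtain ⟨C, hC⟩ := hvtx u v
  exact ⟨_, tendsto_mul_dist_of_dist_eq hX hc hc0 (fun i ↦ (hf i).dist_vtx_kpt u v ht)
    (fun i ↦ (hf i).dist_kpt_vtx u v ht) hA hB hC⟩

theorem StraightOnKG.exists_rescaledLimit (hX : ∀ i, FourPoint (X i) δ) (hc : ∀ i, 0 ≤ c i)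
    (hc0 : Tendsto c l (𝓝 0)) (hf : ∀ i, StraightOnKG (f i))
    (hvtx : ∀ u v, ∃ D, Tendsto (fun i ↦ c i * dist (f i (vtx u)) (f i (vtx v))) l (𝓝 D)) :
    ∃ d, RescaledLimit l c f d := by
  have hone (p : KG G) (u : G) :
      ∃ L, Tendsto (fun i ↦ c i * dist (f i (vtx u)) (f i p)) l (𝓝 L) := by
    simpa only [dist_comm] using exists_tendsto_mul_dist hX hc hc0 hf hvtx (hvtx · u) p
  choose d hd using fun p q ↦ exists_tendsto_mul_dist hX hc hc0 hf hvtx (hone q) p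
  exact ⟨d, hd⟩

end StraightMaps

theorem tendsto_mul_translationLength {X : I → Type*} [∀ i, MetricSpace (X i)]
    (hX : ∀ i, FourPoint (X i) δ) (hgeo : ∀ i, GeodesicSpace (X i)) {Γ : Type*} [MetricSpace Γ]
    (hΓ : FourPoint Γ 0) (hΓgeo : GeodesicSpace Γ) (hc : ∀ i, 0 ≤ c i) (hc0 : Tendsto c l (𝓝 0))
    (τ : ∀ i, X i ≃ᵢ X i) (σ : Γ ≃ᵢ Γ) (x : ∀ i, X i) (z : Γ)
    (h₁ : Tendsto (fun i ↦ c i * dist (x i) (τ i (x i))) l (𝓝 (dist z (σ z))))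
    (h₂ : Tendsto (fun i ↦ c i * dist (x i) (τ i (τ i (x i)))) l (𝓝 (dist z (σ (σ z))))) :
    Tendsto (fun i ↦ c i * translationLength (τ i)) l (𝓝 (translationLength σ)) := by
  rw [hΓ.translationLength_eq hΓgeo σ z]
  have happrox := (tendsto_const_nhds (x := (0 : ℝ))).max (h₂.sub h₁)
  have rescale (i : I) : max 0 (c i * dist (x i) (τ i (τ i (x i))) - c i * dist (x i) (τ i (x i))) =
      c i * max 0 (dist (x i) (τ i (τ i (x i))) - dist (x i) (τ i (x i))) := by
    rw [mul_max_of_nonneg _ _ (hc i), mul_zero, mul_sub]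
  simp only [rescale] at happrox
  refine happrox.congr_dist (squeeze_zero (fun _ ↦ dist_nonneg) (fun i ↦ ?_)
    (g := fun i ↦ c i * (2 * δ)) (by simpa only [zero_mul] using hc0.mul_const (2 * δ)))
  rw [dist_comm, Real.dist_eq, ← mul_sub, abs_mul, abs_of_nonneg (hc i)]
  exact mul_le_mul_of_nonneg_left
    ((hX i).abs_translationLength_sub_le (hgeo i) (τ i) (x i)) (hc i)

theorem RescaledLimit.exists_quotient {Y : Type u} {X : I → Type*} [∀ i, PseudoMetricSpace (X i)]
    {f : ∀ i, Y → X i} {d : Y → Y → ℝ} [l.NeBot] (h : RescaledLimit l c f d)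
    (hc : ∀ i, 0 ≤ c i) :
    ∃ (Γ : Type u) (_ : MetricSpace Γ) (π : Y → Γ), Function.Surjective π ∧
      (∀ p q, dist (π p) (π q) = d p q) ∧ RescaledLimit l c f fun p q ↦ dist (π p) (π q) := by
  let _ : PseudoMetricSpace Y :=
    { dist := d, dist_self := h.self, dist_comm := h.symm, dist_triangle := h.triangle hc }
  exact ⟨SeparationQuotient Y, inferInstance, SeparationQuotient.mk,
    SeparationQuotient.surjective_mk, SeparationQuotient.dist_mk, h⟩

end RescaledLimit

theorem exists_isometric_action {G Y Γ : Type*} [Group G] [MulAction G Y] [MetricSpace Γ]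
    {π : Y → Γ} (hπ : Function.Surjective π)
    (hinv : ∀ (g : G) p q, dist (π (g • p)) (π (g • q)) = dist (π p) (π q)) :
    ∃ σ : G →* (Γ ≃ᵢ Γ), ∀ g p, σ g (π p) = π (g • p) := by
  let act (g : G) (z : Γ) : Γ := π (g • Function.surjInv hπ z)
  have act_π (g : G) (p : Y) : act g (π p) = π (g • p) := by
    rw [← dist_eq_zero, hinv, Function.surjInv_eq hπ, dist_self]
  have act_one : ∀ z, act 1 z = z := hπ.forall.2 fun p ↦ by rw [act_π, one_smul]
  have act_mul (g h : G) : ∀ z, act (g * h) z = act g (act h z) :=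
    hπ.forall.2 fun p ↦ by rw [act_π (g * h), act_π h, act_π g, mul_smul]
  let toIsometryEquiv (g : G) : Γ ≃ᵢ Γ :=
    { toFun := act g
      invFun := act g⁻¹
      left_inv := fun z ↦ by rw [← act_mul, inv_mul_cancel, act_one]
      right_inv := fun z ↦ by rw [← act_mul, mul_inv_cancel, act_one]
      isometry_toFun := Isometry.of_dist_eq <| hπ.forall₂.2 fun p q ↦ by
        rw [act_π, act_π, hinv] }
  exact ⟨{ toFun := toIsometryEquiv
           map_one' := IsometryEquiv.ext act_one
           map_mul' := fun g h ↦ IsometryEquiv.ext (act_mul g h) }, act_π⟩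

section Subsequences

theorem countable_of_closure_eq_top {G : Type*} [Group G] {s : Set G} [Countable s]
    (hs : Subgroup.closure s = ⊤) : Countable G := by
  have hlift : Function.Surjective (FreeGroup.lift ((↑) : s → G)) := by
    rw [← MonoidHom.range_eq_top, FreeGroup.range_lift_eq_closure, Subtype.range_coe, hs]
  have hmk : Function.Surjective (FreeGroup.mk : List (s × Bool) → FreeGroup s) :=
    Quot.mk_surjective
  exact (hlift.comp hmk).countable

theorem exists_strictMono_tendsto_of_bounded {P : Type*} [Countable P] {u : ℕ → P → ℝ}
    (hu : ∀ p, ∃ C, ∀ n, |u n p| ≤ C) :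
    ∃ φ : ℕ → ℕ, StrictMono φ ∧ ∀ p, ∃ L, Tendsto (fun n ↦ u (φ n) p) atTop (𝓝 L) := by
  choose C hC using hu
  obtain ⟨L, -, φ, hφ, hL⟩ :=
    (isCompact_univ_pi fun p ↦ isCompact_Icc (a := -C p) (b := C p)).tendsto_subseq
      (x := u) fun n p _ ↦ abs_le.1 (hC p n)
  exact ⟨φ, hφ, fun p ↦ ⟨L p, tendsto_pi_nhds.1 hL p⟩⟩

theorem tendsto_zero_of_mul_le {I : Type*} {l : Filter I} {c ℓ : I → ℝ} {C : ℝ}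
    (hc : ∀ i, 0 ≤ c i) (hℓ : Tendsto ℓ l atTop) (hC : ∀ i, c i * ℓ i ≤ C) :
    Tendsto c l (𝓝 0) := by
  refine squeeze_zero' (Eventually.of_forall hc) ?_ (hℓ.const_div_atTop C)
  filter_upwards [hℓ.eventually_gt_atTop 0] with i hi
  exact (le_div_iff₀ hi).2 (hC i)

end Subsequences

section Rescaling

variable {G I : Type*} [Group G] {l : Filter I} {X : I → Type*} [∀ i, MetricSpace (X i)]
  {ρ : ∀ i, G →* (X i ≃ᵢ X i)} {x : ∀ i, X i} {c : I → ℝ} {S : Finset G} {hS : S.Nonempty}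

theorem exists_forall_mul_dist_le {s : Set G} (hs : Subgroup.closure s = ⊤) (hc : ∀ i, 0 ≤ c i)
    (h : ∀ g ∈ s, ∃ C, ∀ i, c i * dist (x i) (ρ i g (x i)) ≤ C) (g : G) :
    ∃ C, ∀ i, c i * dist (x i) (ρ i g (x i)) ≤ C := by
  induction (hs ▸ Subgroup.mem_top g : g ∈ Subgroup.closure s) using
    Subgroup.closure_induction with
  | mem g hg => exact h g hg
  | one => exact ⟨0, fun i ↦ by simp⟩
  | mul a b _ _ iha ihb =>
    obtain ⟨A, hA⟩ := iha
    obtain ⟨B, hB⟩ := ihb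
    refine ⟨A + B, fun i ↦ ?_⟩
    calc c i * dist (x i) (ρ i (a * b) (x i))
      _ ≤ c i * (dist (x i) (ρ i a (x i)) + dist (ρ i a (x i)) (ρ i (a * b) (x i))) :=
        mul_le_mul_of_nonneg_left (dist_triangle _ _ _) (hc i)
      _ = c i * dist (x i) (ρ i a (x i)) + c i * dist (x i) (ρ i b (x i)) := by
        rw [map_mul, IsometryEquiv.mul_apply, IsometryEquiv.dist_eq, mul_add]
      _ ≤ A + B := add_le_add (hA i) (hB i)
  | inv a _ iha =>
    obtain ⟨A, hA⟩ := iha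
    refine ⟨A, fun i ↦ (le_of_eq ?_).trans (hA i)⟩
    rw [← (ρ i a).dist_eq (x i), map_inv, IsometryEquiv.apply_inv_self, dist_comm]

theorem rescaleFactor_pos {X : Type*} [MetricSpace X] (f : KG G → X) :
    0 < rescaleFactor S hS f :=
  inv_pos.2 (zero_lt_one.trans_le (le_max_left _ _))

theorem rescaleFactor_eq {X : Type*} [MetricSpace X] {ρ : G →* (X ≃ᵢ X)} {x : X} {f : KG G → X}
    (hf : ∀ g, f (vtx g) = ρ g x) : rescaleFactor S hS f = (max 1 (rS S hS ρ x))⁻¹ := by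
  simp only [rescaleFactor, rS, hf, map_one, IsometryEquiv.coe_one, id_eq]

theorem rescaleFactor_mul_max {X : Type*} [MetricSpace X] {ρ : G →* (X ≃ᵢ X)} {x : X}
    {f : KG G → X} (hf : ∀ g, f (vtx g) = ρ g x) :
    rescaleFactor S hS f * max 1 (rS S hS ρ x) = 1 := by
  rw [rescaleFactor_eq hf]
  exact inv_mul_cancel₀ (zero_lt_one.trans_le (le_max_left _ _)).ne'

theorem exists_forall_rescaleFactor_mul_dist_le (hgen : Subgroup.closure (S : Set G) = ⊤)
    {f : ∀ i, KG G → X i} (hf : ∀ i g, f i (vtx g) = ρ i g (x i)) (g : G) :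
    ∃ C, ∀ i, rescaleFactor S hS (f i) * dist (x i) (ρ i g (x i)) ≤ C := by
  have hpos (i : I) := (rescaleFactor_pos (S := S) (hS := hS) (f i)).le
  refine exists_forall_mul_dist_le hgen hpos (fun s hs ↦ ⟨1, fun i ↦ ?_⟩) g
  rw [← rescaleFactor_mul_max (S := S) (hS := hS) (hf i)]
  exact mul_le_mul_of_nonneg_left
    ((Finset.le_sup' (fun α ↦ dist (x i) (ρ i α (x i))) hs).trans (le_max_right _ _)) (hpos i)

theorem tendsto_rescaleFactor_zero (hgen : Subgroup.closure (S : Set G) = ⊤)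
    {f : ∀ i, KG G → X i} (hf : ∀ i g, f i (vtx g) = ρ i g (x i)) {α : G}
    (hα : Tendsto (fun i ↦ translationLength (ρ i α)) l atTop) :
    Tendsto (fun i ↦ rescaleFactor S hS (f i)) l (𝓝 0) := by
  obtain ⟨C, hC⟩ := exists_forall_rescaleFactor_mul_dist_le (hS := hS) hgen hf α
  refine tendsto_zero_of_mul_le (fun i ↦ (rescaleFactor_pos _).le) hα (C := C) fun i ↦ ?_
  exact (mul_le_mul_of_nonneg_left (translationLength_le_dist _ _)
    (rescaleFactor_pos _).le).trans (hC i)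

theorem exists_subseq_rescaledLimit {X : ℕ → Type*} [∀ n, MetricSpace (X n)]
    {ρ : ∀ n, G →* (X n ≃ᵢ X n)} {x : ∀ n, X n} {δ : ℝ} (hX : ∀ n, FourPoint (X n) δ)
    (hgen : Subgroup.closure (S : Set G) = ⊤) {f : ∀ n, KG G → X n}
    (hvtx : ∀ n g, f n (vtx g) = ρ n g (x n)) (hf : ∀ n, StraightOnKG (f n))
    (hlim : Tendsto (fun n ↦ rescaleFactor S hS (f n)) atTop (𝓝 0)) :
    ∃ φ : ℕ → ℕ, StrictMono φ ∧ ∃ d, RescaledLimit atTop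
      (fun n ↦ rescaleFactor S hS (f (φ n))) (fun n ↦ f (φ n)) d := by
  have : Countable G := countable_of_closure_eq_top hgen
  have hpos (n : ℕ) := (rescaleFactor_pos (S := S) (hS := hS) (f n)).le
  obtain ⟨φ, hφ, hlimφ⟩ := exists_strictMono_tendsto_of_bounded (P := G × G)
    (u := fun n p ↦ rescaleFactor S hS (f n) * dist (f n (vtx p.1)) (f n (vtx p.2))) <| by
    rintro ⟨g, h⟩
    obtain ⟨C, hC⟩ := exists_forall_rescaleFactor_mul_dist_le (hS := hS) hgen hvtx (g⁻¹ * h)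
    refine ⟨C, fun n ↦ (le_of_eq ?_).trans (hC n)⟩
    rw [abs_of_nonneg (mul_nonneg (hpos n) dist_nonneg), hvtx, hvtx,
      ← (ρ n g).dist_eq (x n), ← IsometryEquiv.mul_apply, ← map_mul, mul_inv_cancel_left]
  exact ⟨φ, hφ, StraightOnKG.exists_rescaledLimit (fun n ↦ hX (φ n)) (fun n ↦ hpos (φ n))
    (hlim.comp hφ.tendsto_atTop) (fun n ↦ hf (φ n)) fun u v ↦ hlimφ (u, v)⟩

-- If all displacements `c i * dist (y i) (ρ i s (y i))` tended to zero, then so would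
-- `c i * rS S hS (ρ i) (y i)`, hence also `c i * max 1 (rS S hS (ρ i) (x i))`.
theorem exists_mem_not_tendsto_mul_dist_zero [l.NeBot] (hc : ∀ i, 0 ≤ c i)
    (hc0 : Tendsto c l (𝓝 0)) (hnorm : ∀ i, c i * max 1 (rS S hS (ρ i) (x i)) = 1)
    (hcenter : ∀ i y, rS S hS (ρ i) (x i) ≤ rS S hS (ρ i) y + 1) (y : ∀ i, X i) :
    ∃ s ∈ S, ¬ Tendsto (fun i ↦ c i * dist (y i) (ρ i s (y i))) l (𝓝 0) := by
  by_contra! h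
  have hr : Tendsto (fun i ↦ c i * rS S hS (ρ i) (y i)) l (𝓝 0) := by
    have := Tendsto.finset_sup'_nhds_apply hS h
    rw [Finset.sup'_const] at this
    simpa only [rS, Finset.mul₀_sup' (hc _)] using this
  refine one_ne_zero (le_antisymm (ge_of_tendsto' (add_zero (0 : ℝ) ▸ hr.add hc0) fun i ↦ ?_)
    zero_le_one)
  obtain ⟨s, hs⟩ := hS
  have hr0 : 0 ≤ rS S ⟨s, hs⟩ (ρ i) (y i) :=
    dist_nonneg.trans (Finset.le_sup' (fun α ↦ dist (y i) (ρ i α (y i))) hs)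
  calc 1 = c i * max 1 (rS S _ (ρ i) (x i)) := (hnorm i).symm
    _ ≤ c i * (rS S _ (ρ i) (y i) + 1) :=
      mul_le_mul_of_nonneg_left (max_le (by linarith) (hcenter i (y i))) (hc i)
    _ = c i * rS S _ (ρ i) (y i) + c i := by rw [mul_add, mul_one]

theorem RescaledLimit.exists_mem_ne [l.NeBot] {Y Γ : Type*} [MetricSpace Γ] [MulAction G Y]
    {π : Y → Γ} {f : ∀ i, Y → X i} (h : RescaledLimit l c f fun p q ↦ dist (π p) (π q))
    (hπ : Function.Surjective π) (hf : ∀ i (g : G) p, f i (g • p) = ρ i g (f i p))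
    {σ : G →* (Γ ≃ᵢ Γ)} (hσ : ∀ g p, σ g (π p) = π (g • p))
    (hc : ∀ i, 0 ≤ c i) (hc0 : Tendsto c l (𝓝 0))
    (hnorm : ∀ i, c i * max 1 (rS S hS (ρ i) (x i)) = 1)
    (hcenter : ∀ i y, rS S hS (ρ i) (x i) ≤ rS S hS (ρ i) y + 1) (z : Γ) :
    ∃ s ∈ S, σ s z ≠ z := by
  obtain ⟨p, rfl⟩ := hπ z
  obtain ⟨s, hs, hns⟩ :=
    exists_mem_not_tendsto_mul_dist_zero hc hc0 hnorm hcenter fun i ↦ f i p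
  refine ⟨s, hs, fun hfix ↦ hns ?_⟩
  simpa only [← hσ, hfix, dist_self, hf] using h p (s • p)

theorem RescaledLimit.tendsto_mul_translationLength {Y Γ : Type*} [MetricSpace Γ] [MulAction G Y]
    [Nonempty Y] {δ : ℝ} (hX : ∀ i, FourPoint (X i) δ) (hgeo : ∀ i, GeodesicSpace (X i))
    (hΓ : FourPoint Γ 0) (hΓgeo : GeodesicSpace Γ) (hc : ∀ i, 0 ≤ c i)
    (hc0 : Tendsto c l (𝓝 0)) {π : Y → Γ} {f : ∀ i, Y → X i}
    (h : RescaledLimit l c f fun p q ↦ dist (π p) (π q))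
    (hf : ∀ i (g : G) p, f i (g • p) = ρ i g (f i p))
    {σ : G →* (Γ ≃ᵢ Γ)} (hσ : ∀ g p, σ g (π p) = π (g • p)) (g : G) :
    Tendsto (fun i ↦ c i * translationLength (ρ i g)) l (𝓝 (translationLength (σ g))) := by
  obtain ⟨p⟩ := ‹Nonempty Y›
  refine _root_.tendsto_mul_translationLength hX hgeo hΓ hΓgeo hc hc0 (ρ · g) (σ g)
    (fun i ↦ f i p) (π p) ?_ ?_
  · simpa only [hσ, hf] using h p (g • p)
  · simpa only [hσ, hf] using h p (g • g • p)

end Rescaling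

theorem FourPoint.exists_isHyperbolicIsom {G X : Type*} [Group G] [MetricSpace X] [Nonempty X]
    (hX : FourPoint X 0) (hgeo : GeodesicSpace X) {S : Finset G} (hS : S.Nonempty)
    {σ : G →* (X ≃ᵢ X)} (hfix : ∀ z, ∃ s ∈ S, σ s z ≠ z) : ∃ g, IsHyperbolicIsom (σ g) := by
  by_contra! hσ
  obtain ⟨z⟩ := ‹Nonempty X›
  obtain ⟨m, hm⟩ := hX.exists_common_fixed_point hgeo hS σ z fun g ↦ by
    have : Nonempty X := ⟨z⟩
    exact ((translationLength_nonneg _).eq_of_not_lt fun h ↦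
      hσ g (hX.isHyperbolicIsom_of_translationLength_pos hgeo h)).symm
  obtain ⟨s, hs, hsm⟩ := hfix m
  exact hsm (hm s hs)

/-- The main limiting proposition: a blowing-up sequence of isometric
actions of a finitely generated group on geodesic spaces with `Δ`-thin triangles
subconverges, after rescaling, to an isometric action on an `ℝ`-tree with a hyperbolic
element, the length functions converging projectively; if moreover the limit action is
irreducible with integer translation lengths, the minimal invariant subtree is simplicial
with the same length function. -/
theorem length_limit {G : Type u} [Group G]
    (S : Finset G) (hS : S.Nonempty) (hgen : Subgroup.closure (S : Set G) = ⊤)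
    {Δ : ℝ} (hΔ : 0 < Δ)
    (H : ℕ → Type v) [∀ n, MetricSpace (H n)] [∀ n, Nonempty (H n)]
    (hgeo : ∀ n, GeodesicSpace (H n)) (hthin : ∀ n, ThinTriangles (H n) Δ)
    (ρ : ∀ n, G →* (H n ≃ᵢ H n))
    (hblow : ∃ α : G,
      Filter.Tendsto (fun n => translationLength (ρ n α)) Filter.atTop Filter.atTop)
    (x : ∀ n, H n)
    (hcenter : ∀ n, ∀ y : H n, rS S hS (ρ n) (x n) ≤ rS S hS (ρ n) y + 1)
    (ι : ∀ n, KG G → H n)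
    (hvert : ∀ n, ∀ g : G, ι n (vtx g) = ρ n g (x n))
    (hstraight : ∀ n, StraightOnKG (ι n))
    (hequiv : ∀ n, ∀ g : G, ∀ p : KG G, ι n (leftMulKG g p) = ρ n g (ι n p)) :
    ∃ φ : ℕ → ℕ, StrictMono φ ∧
      Filter.Tendsto (fun i => rescaleFactor S hS (ι (φ i))) Filter.atTop (nhds 0) ∧
      ∃ dbar : KG G → KG G → ℝ,
        (∀ p, dbar p p = 0) ∧ (∀ p q, dbar p q = dbar q p) ∧
        (∀ p q r, dbar p r ≤ dbar p q + dbar q r) ∧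
        (∀ p q : KG G,
          Filter.Tendsto
            (fun i => rescaleFactor S hS (ι (φ i)) * dist (ι (φ i) p) (ι (φ i) q))
            Filter.atTop (nhds (dbar p q))) ∧
        ∃ (Γ : Type u) (_ : MetricSpace Γ) (qm : KG G → Γ),
          Function.Surjective qm ∧ (∀ p q', dist (qm p) (qm q') = dbar p q') ∧
          IsRTree Γ ∧
          ∃ σ : G →* (Γ ≃ᵢ Γ),
            (∀ g : G, ∀ p : KG G, σ g (qm p) = qm (leftMulKG g p)) ∧
            (∃ g : G, IsHyperbolicIsom (σ g)) ∧
            (∀ g : G,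
              Filter.Tendsto
                (fun i => rescaleFactor S hS (ι (φ i)) * translationLength (ρ (φ i) g))
                Filter.atTop (nhds (translationLength (σ g)))) ∧
            (((∃ a b : G, IsHyperbolicIsom (σ a) ∧ IsHyperbolicIsom (σ b) ∧
                  Disjoint (isomCore (σ a)) (isomCore (σ b))) ∧
              (∀ g : G, ∃ k : ℤ, translationLength (σ g) = (k : ℝ))) →
              ∃ W : Set Γ, IsConnected W ∧ (∀ g : G, σ g '' W = W) ∧
                (∀ W' : Set Γ, IsConnected W' → (∀ g : G, σ g '' W' = W') → W ⊆ W') ∧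
                IsMetricSimplicialTree ↥W ∧
                (∀ g : G, (⨅ z : W, dist (z : Γ) (σ g (z : Γ)))
                    = translationLength (σ g))) := by
  have hX n := (hthin n).fourPoint (hgeo n)
  have hc n := (rescaleFactor_pos (S := S) (hS := hS) (ι n)).le
  obtain ⟨α, hα⟩ := hblow
  have hlim := tendsto_rescaleFactor_zero (hS := hS) hgen hvert hα
  obtain ⟨φ, hφ, d, hd⟩ := exists_subseq_rescaledLimit hX hgen hvert hstraight hlim
  have hcφ n := hc (φ n)
  have hlimφ := hlim.comp hφ.tendsto_atTop
  have hequivφ n (g : G) p : ι (φ n) (g • p) = ρ (φ n) g (ι (φ n) p) := hequiv (φ n) g p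
  obtain ⟨Γ, _, π, hπ, hπd, hdπ⟩ := hd.exists_quotient hcφ
  have : Nonempty (KG G) := ⟨vtx 1⟩
  have : Nonempty Γ := this.map π
  have hΓ := hdπ.fourPoint (fun n ↦ hX (φ n)) hcφ hlimφ hπ
  have hΓgeo := (hdπ.straightOnKG fun n ↦ hstraight (φ n)).geodesicSpace hΓ hπ
  obtain ⟨σ, hσ⟩ := exists_isometric_action hπ fun g : G ↦
    hdπ.map_eq (fun n ↦ (ρ (φ n) g).isometry) (hequivφ · g)
  have hhyp := hΓ.exists_isHyperbolicIsom hΓgeo hS <| hdπ.exists_mem_ne hπ hequivφ hσ hcφ hlimφ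
    (fun n ↦ rescaleFactor_mul_max (hvert (φ n))) fun n ↦ hcenter (φ n)
  have hlen := RescaledLimit.tendsto_mul_translationLength (fun n ↦ hX (φ n))
    (fun n ↦ hgeo (φ n)) hΓ hΓgeo hcφ hlimφ hdπ hequivφ hσ
  refine ⟨φ, hφ, hlimφ, d, hd.self, hd.symm, hd.triangle hcφ, hd, Γ, _, π, hπ, hπd,
    hΓ.isRTree hΓgeo, σ, hσ, hhyp, hlen, ?_⟩
  rintro ⟨⟨a, b, ha, hb, hdisj⟩, hint⟩
  simpa only [MonoidHom.mem_range, forall_exists_index, forall_apply_eq_imp_iff] using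
    hΓ.exists_minimal_simplicial_subtree hΓgeo (K := σ.range) ⟨a, rfl⟩ ⟨b, rfl⟩ ha.1 hb.1 hdisj
      (by simpa only [MonoidHom.mem_range, forall_exists_index, forall_apply_eq_imp_iff])
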